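/- For every hyperspecial vertex s₁ ∈ S, there exists a unique element a of the coset A_Λ* = {a'∘* : a' ∈ A_Λ} ⊆ Aut(W,S) such that a(s₀) = s₁. -/

import Mathlib

set_option synthInstance.maxHeartbeats 1000000
set_option maxHeartbeats 2000000

open scoped Classical

noncomputable section

namespace LY

/-! ## The coefficient field `ℚ(q)` -/

/-- The field `ℚ(q)` of rational functions. -/
abbrev K : Type := RatFunc ℚ

/-- The indeterminate `q`. -/
def qK : K := RatFunc.X

/-- The inclusion `ℤ[q] → ℚ(q)`. -/
def toK (p : Polynomial ℤ) : K := algebraMap (Polynomial ℚ) K (p.map (Int.castRingHom ℚ))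

/-- Evaluation of `p ∈ ℤ[q]` at `−q`, as an element of `ℚ(q)`; i.e. `p(−q)`. -/
def atNegQ (p : Polynomial ℤ) : K := Polynomial.eval₂ (Int.castRingHom K) (-qK) p

/-- The standard basis element `T_w` (resp. `a_w`) of the function model `W → ℚ(q)`
of the Hecke algebra (resp. of the Lusztig–Vogan module `M`). -/
def TT {W : Type} (w : W) : W → K := fun y => if y = w then 1 else 0

variable {B W : Type} [Group W] {M : CoxeterMatrix B}

/-- The Bruhat order on a Coxeter group: `u ≤ v` iff `v` is obtained from `u` by successive
right multiplications by reflections, each increasing the length. -/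
def BruhatLE (cs : CoxeterSystem M W) (u v : W) : Prop :=
  Relation.ReflTransGen
    (fun a b => cs.length a < cs.length b ∧ ∃ t, cs.IsReflection t ∧ b = a * t) u v

/-- Connectedness of the Coxeter diagram of `M`. -/
def DiagramConnected (M : CoxeterMatrix B) : Prop :=
  ∀ i j : B, Relation.ReflTransGen (fun a b => a ≠ b ∧ M a b ≠ 2) i j

/-- An automorphism of `W` preserving the set `S` of simple reflections, i.e. an element
of `A = Aut(W,S)`. -/
def IsDiagAut (cs : CoxeterSystem M W) (a : MulAut W) : Prop :=
  (⇑a) '' (Set.range cs.simple) = Set.range cs.simple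

/-! ## The affine setting -/

/-- All the data and axioms describing the setting: `(W,S)` is the Coxeter group of an
untwisted connected affine Dynkin diagram (an irreducible affine Weyl group); `Λ` is the
subgroup of translations (elements with finite conjugacy class), free abelian of finite
rank and of finite index; `s₀` is a hyperspecial vertex, `J = S − {s₀}`, `W_J` is the
finite subgroup generated by `J` with longest element `w_J`; `*` is the involution of `W`
given by `w* = w_J w w_J` on `W_J` and `λ* = −(ʷᴶλ)` on `Λ`; `pr` is the projection
`W → W_J` along `Λ`; `ρ` is the conjugation action of `W` on `Λ_ℚ ≅ ℚ^rank`
(via the identification `freeIso` of `Λ` with `ℤ^rank`). -/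
structure AffineData (cs : CoxeterSystem M W) where
  finB : Finite B
  conn : DiagramConnected M
  infW : Infinite W
  /-- the subgroup `Λ` of translations -/
  Lam : Subgroup W
  hLam_mem : ∀ w : W, w ∈ Lam ↔ {x : W | IsConj w x}.Finite
  hLam_normal : Lam.Normal
  hLam_comm : ∀ a ∈ Lam, ∀ b ∈ Lam, a * b = b * a
  hLam_index : Lam.FiniteIndex
  /-- `Λ` is free abelian of finite rank -/
  rank : ℕ
  freeIso : Lam ≃* Multiplicative (Fin rank → ℤ)
  /-- the hyperspecial vertex `s₀` -/
  s0 : W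
  hs0_S : s0 ∈ Set.range cs.simple
  /-- `s₀` is hyperspecial: the projection `W → W/Λ` restricts to an isomorphism from the
  subgroup generated by `S − {s₀}` onto `W/Λ`. -/
  hs0_hyper : ∀ w : W, ∃! u : W,
    u ∈ Subgroup.closure (Set.range cs.simple \ {s0}) ∧ w * u⁻¹ ∈ Lam
  hWJ_fin : (Subgroup.closure (Set.range cs.simple \ {s0}) : Set W).Finite
  /-- the longest element `w_J` of `W_J` -/
  wJ : W
  hwJ_mem : wJ ∈ Subgroup.closure (Set.range cs.simple \ {s0})
  hwJ_max : ∀ u ∈ Subgroup.closure (Set.range cs.simple \ {s0}), cs.length u ≤ cs.length wJ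
  /-- the involution `*` of `W` -/
  st : MulAut W
  hst_inv : ∀ w : W, st (st w) = w
  hst_J : ∀ u ∈ Subgroup.closure (Set.range cs.simple \ {s0}), st u = wJ * u * wJ
  hst_Lam : ∀ l ∈ Lam, st l = (wJ * l * wJ⁻¹)⁻¹
  hst_S : ∀ s ∈ Set.range cs.simple, st s ∈ Set.range cs.simple
  /-- lower Bruhat intervals are finite -/
  hBruhat_fin : ∀ w : W, {y : W | BruhatLE cs y w}.Finite
  /-- the projection `W → W_J` along `Λ` (`w ↦ w̄`) -/
  pr : W → W
  hpr : ∀ w : W, pr w ∈ Subgroup.closure (Set.range cs.simple \ {s0}) ∧ w * (pr w)⁻¹ ∈ Lam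
  /-- the conjugation action of `W` on `Λ_ℚ ≅ ℚ^rank` -/
  rho : W → ((Fin rank → ℚ) →ₗ[ℚ] (Fin rank → ℚ))
  hrho : ∀ (w : W) (l : Lam),
    rho w (fun i => ((Multiplicative.toAdd (freeIso l)) i : ℚ)) =
      fun i => ((Multiplicative.toAdd
        (freeIso ⟨w * (l : W) * w⁻¹, hLam_normal.conj_mem _ l.2 w⟩)) i : ℚ)

namespace AffineData

variable {cs : CoxeterSystem M W} (D : AffineData cs)

/-- The set `J = S − {s₀}`. -/
def Jset : Set W := Set.range cs.simple \ {D.s0}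

/-- The finite Weyl group `W_J`. -/
def WJ : Subgroup W := Subgroup.closure D.Jset

/-- `λ ∈ Λ` is a dominant translation (`λ ∈ Λ⁺`). -/
def IsDominant (l : W) : Prop :=
  l ∈ D.Lam ∧ cs.length (l * D.wJ) = cs.length l + cs.length D.wJ

/-- The embedding `Λ → Λ_ℚ = ℚ^rank`. -/
def iota (l : D.Lam) : Fin D.rank → ℚ :=
  fun i => ((Multiplicative.toAdd (D.freeIso l)) i : ℚ)

/-- `e(A)`: the dimension of the `(−1)`-eigenspace of a linear endomorphism `A` of `Λ_ℚ`. -/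
def eNeg (f : (Fin D.rank → ℚ) →ₗ[ℚ] (Fin D.rank → ℚ)) : ℕ :=
  Module.finrank ℚ (Module.End.eigenspace (f : Module.End ℚ (Fin D.rank → ℚ)) (-1))

/-- The map `A_u : λ ↦ ᵘ(λ*) = −(ᵘʷᴶλ)` on `Λ_ℚ`, for `u ∈ W_J`. -/
def Amap (u : W) : (Fin D.rank → ℚ) →ₗ[ℚ] (Fin D.rank → ℚ) := - D.rho (u * D.wJ)

/-- The invariant `φ(w) = e(A_{w̄}) − e(A_e)` for `w ∈ I_*`. -/
def phi (w : W) : ℤ := (D.eNeg (D.Amap (D.pr w)) : ℤ) - (D.eNeg (D.Amap 1) : ℤ)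

/-- The double coset `W_J x W_J`. -/
def DCoset (x : W) : Set W := {y : W | ∃ u ∈ D.WJ, ∃ v ∈ D.WJ, y = u * x * v}

/-- The set `H = J ∩ bJb⁻¹`. -/
def Hset (b : W) : Set W := D.Jset ∩ ((fun s => b * s * b⁻¹) '' D.Jset)

/-- The set `H* ⊆ J`, image of `H` under `*`. -/
def Hstar (b : W) : Set W := (⇑D.st) '' D.Hset b

/-- The subgroup `W_{H*}` generated by `H*`. -/
def WHstar (b : W) : Subgroup W := Subgroup.closure (D.Hstar b)

/-- The reflection representation `R'` of `W_{H*}`, as a subspace of `Λ_ℚ`: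
the span of the vectors `λ − ˢλ` for `λ ∈ Λ`, `s ∈ H*`. -/
def Rprime (b : W) : Submodule ℚ (Fin D.rank → ℚ) :=
  Submodule.span ℚ
    {v : Fin D.rank → ℚ | ∃ l : D.Lam, ∃ s ∈ D.Hstar b,
      v = D.iota l - D.iota ⟨s * (l : W) * s⁻¹, D.hLam_normal.conj_mem _ l.2 s⟩}

/-- `e'(A)`: the dimension of the `(−1)`-eigenspace of an endomorphism `A` of `R'`. -/
def eNeg' {b : W} (f : ↥(D.Rprime b) →ₗ[ℚ] ↥(D.Rprime b)) : ℕ :=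
  Module.finrank ℚ (Module.End.eigenspace (f : Module.End ℚ ↥(D.Rprime b)) (-1))

/-- `φ'(z) = e'(B_z) − e'(B_e)`, where `B_u : x ↦ −u·(w_{H*}·x)` on `R'`; here
`rho'` is the conjugation action of `W_{H*}` on `R'` and `wHs` is the longest element
of `W_{H*}`. -/
def phiP {b : W} (rho' : W → (↥(D.Rprime b) →ₗ[ℚ] ↥(D.Rprime b))) (wHs z : W) : ℤ :=
  (D.eNeg' (-(rho' (z * wHs))) : ℤ) - (D.eNeg' (-(rho' wHs)) : ℤ)

/-- Membership in `A_Λ ⊆ A = Aut(W,S)`: automorphisms acting on `Λ` as conjugation by some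
element of `W_J`. -/
def InALam (a : MulAut W) : Prop :=
  IsDiagAut cs a ∧ ∃ w ∈ D.WJ, ∀ l ∈ D.Lam, a l = w * l * w⁻¹

/-- Membership in the coset `A_Λ* = {a ∘ * : a ∈ A_Λ}`. -/
def InALamStar (c : MulAut W) : Prop := ∃ a : MulAut W, D.InALam a ∧ c = a * D.st

/-- The double coset `W_J x W_J^◇`, where `W_J^◇` is the subgroup generated by
`J^◇ = S − {s₁}`. -/
def DCosetDia (s1 : W) (x : W) : Set W :=
  {y : W | ∃ u ∈ D.WJ, ∃ v ∈ Subgroup.closure (Set.range cs.simple \ {s1}), y = u * x * v}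


end AffineData

/-! ## The Hecke algebra, the Lusztig–Vogan module, and the polynomials `P`, `P^σ` -/

/-- The Hecke algebra of `(W,S)` over `ℚ(q)` (modelled on functions `W → ℚ(q)`, with basis
`TT w = T_w`), together with its bar involution, and the Kazhdan–Lusztig polynomials
`P_{y,w} ∈ ℤ[q]` characterized by their defining properties. -/
structure HeckeData (cs : CoxeterSystem M W) where
  /-- the involution `q ↦ q⁻¹` of `ℚ(q)` -/
  barK : K →+* K
  hbarK_X : barK qK = qK⁻¹
  hbarK_inv : ∀ x, barK (barK x) = x
  /-- the multiplication of the Hecke algebra -/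
  mulH : (W → K) →ₗ[K] (W → K) →ₗ[K] (W → K)
  hmul_assoc : ∀ x y z : W → K, mulH (mulH x y) z = mulH x (mulH y z)
  hmul_one : ∀ x : W → K, mulH (TT 1) x = x ∧ mulH x (TT 1) = x
  hmul_TT : ∀ u v : W, cs.length (u * v) = cs.length u + cs.length v →
    mulH (TT u) (TT v) = TT (u * v)
  hmul_Ts : ∀ s ∈ Set.range cs.simple,
    mulH (TT s) (TT s) = (qK - 1) • TT s + qK • TT (1 : W)
  /-- the bar involution of the Hecke algebra: the ring involution with `q ↦ q⁻¹`,
  `T_w ↦ (T_{w⁻¹})⁻¹` -/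
  barH : (W → K) →+ (W → K)
  hbarH_inv : ∀ x, barH (barH x) = x
  hbarH_smul : ∀ (c : K) (x : W → K), barH (c • x) = barK c • barH x
  hbarH_mul : ∀ x y : W → K, barH (mulH x y) = mulH (barH x) (barH y)
  hbarH_T : ∀ w : W, mulH (barH (TT w)) (TT w⁻¹) = TT (1 : W) ∧
    mulH (TT w⁻¹) (barH (TT w)) = TT (1 : W)
  /-- the Kazhdan–Lusztig polynomials `P_{y,w}` -/
  P : W → W → Polynomial ℤ
  hP_supp : ∀ y w : W, ¬ BruhatLE cs y w → P y w = 0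
  hP_diag : ∀ w : W, P w w = 1
  hP_deg : ∀ y w : W, BruhatLE cs y w → y ≠ w →
    2 * (P y w).natDegree + 1 ≤ cs.length w - cs.length y
  hP_dual : ∀ w : W,
    (qK ^ cs.length w) • barH (fun y => if BruhatLE cs y w then toK (P y w) else 0)
      = fun y => if BruhatLE cs y w then toK (P y w) else 0

/-- The Lusztig–Vogan module `M` over the Hecke algebra `H'` with parameter `q²`, attached to
a length-preserving involutive automorphism `star` of `(W,S)`, together with its bar
involution, and the polynomials `P^σ_{y,w} ∈ ℤ[q]` (for `y, w ∈ I_*`) characterized by their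
defining properties.  Both `H'` and `M` are modelled on functions `W → ℚ(q)`; the basis
element `a_w` of `M` (for `w ∈ I_*`) is `TT w`. -/
structure LVData (cs : CoxeterSystem M W) (star : MulAut W) where
  /-- the involution `q ↦ q⁻¹` of `ℚ(q)` -/
  barK : K →+* K
  hbarK_X : barK qK = qK⁻¹
  hbarK_inv : ∀ x, barK (barK x) = x
  /-- the multiplication of the Hecke algebra `H'` with parameter `q²` -/
  mulH' : (W → K) →ₗ[K] (W → K) →ₗ[K] (W → K)
  hmul'_assoc : ∀ x y z : W → K, mulH' (mulH' x y) z = mulH' x (mulH' y z)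
  hmul'_one : ∀ x : W → K, mulH' (TT 1) x = x ∧ mulH' x (TT 1) = x
  hmul'_TT : ∀ u v : W, cs.length (u * v) = cs.length u + cs.length v →
    mulH' (TT u) (TT v) = TT (u * v)
  hmul'_Ts : ∀ s ∈ Set.range cs.simple,
    mulH' (TT s) (TT s) = (qK ^ 2 - 1) • TT s + (qK ^ 2) • TT (1 : W)
  /-- the bar involution of `H'` -/
  barH' : (W → K) →+ (W → K)
  hbarH'_inv : ∀ x, barH' (barH' x) = x
  hbarH'_smul : ∀ (c : K) (x : W → K), barH' (c • x) = barK c • barH' x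
  hbarH'_mul : ∀ x y : W → K, barH' (mulH' x y) = mulH' (barH' x) (barH' y)
  hbarH'_T : ∀ w : W, mulH' (barH' (TT w)) (TT w⁻¹) = TT (1 : W) ∧
    mulH' (TT w⁻¹) (barH' (TT w)) = TT (1 : W)
  /-- the action of `H'` on the module `M` -/
  actM : (W → K) →ₗ[K] (W → K) →ₗ[K] (W → K)
  hact_one : ∀ m : W → K, actM (TT 1) m = m
  hact_mul : ∀ (h h' : W → K) (m : W → K), actM (mulH' h h') m = actM h (actM h' m)
  hact1 : ∀ s ∈ Set.range cs.simple, ∀ w : W, star w = w⁻¹ →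
    s * w = w * star s → cs.length w < cs.length (s * w) →
    actM (TT s) (TT w) = qK • TT w + (qK + 1) • TT (s * w)
  hact2 : ∀ s ∈ Set.range cs.simple, ∀ w : W, star w = w⁻¹ →
    s * w = w * star s → cs.length (s * w) < cs.length w →
    actM (TT s) (TT w) = (qK ^ 2 - qK - 1) • TT w + (qK ^ 2 - qK) • TT (s * w)
  hact3 : ∀ s ∈ Set.range cs.simple, ∀ w : W, star w = w⁻¹ →
    s * w ≠ w * star s → cs.length w < cs.length (s * w) →
    actM (TT s) (TT w) = TT (s * w * star s)
  hact4 : ∀ s ∈ Set.range cs.simple, ∀ w : W, star w = w⁻¹ →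
    s * w ≠ w * star s → cs.length (s * w) < cs.length w →
    actM (TT s) (TT w) = (qK ^ 2 - 1) • TT w + (qK ^ 2) • TT (s * w * star s)
  /-- the bar involution of the module `M` -/
  barM : (W → K) →+ (W → K)
  hbarM_inv : ∀ m : W → K, barM (barM m) = m
  hbarM_smul : ∀ (c : K) (m : W → K), barM (c • m) = barK c • barM m
  hbarM_act : ∀ (h m : W → K), barM (actM h m) = actM (barH' h) (barM m)
  hbarM_one : barM (TT 1) = TT (1 : W)
  /-- the Lusztig–Vogan polynomials `P^σ_{y,w}` -/
  Psig : W → W → Polynomial ℤ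
  hPsig_supp : ∀ y w : W, ¬ (BruhatLE cs y w ∧ star y = y⁻¹) → Psig y w = 0
  hPsig_diag : ∀ w : W, star w = w⁻¹ → Psig w w = 1
  hPsig_deg : ∀ y w : W, star w = w⁻¹ → star y = y⁻¹ → BruhatLE cs y w → y ≠ w →
    2 * (Psig y w).natDegree + 1 ≤ cs.length w - cs.length y
  hPsig_dual : ∀ w : W, star w = w⁻¹ →
    (qK ^ (2 * cs.length w)) •
        barM (fun y => if BruhatLE cs y w ∧ star y = y⁻¹ then toK (Psig y w) else 0)
      = fun y => if BruhatLE cs y w ∧ star y = y⁻¹ then toK (Psig y w) else 0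

/-! ## The `Z`-polynomials -/

/-- `Z_w(q) = Σ_{y ≤ w} P_{y,w}(q) q^{ℓ(y)}`. -/
def Zpoly (cs : CoxeterSystem M W) (HD : HeckeData cs) (w : W) : K :=
  ∑ᶠ y : W, if BruhatLE cs y w then toK (HD.P y w) * qK ^ cs.length y else 0

/-- `Z_w(−q) = Σ_{y ≤ w} P_{y,w}(−q) (−q)^{ℓ(y)}`. -/
def ZpolyNeg (cs : CoxeterSystem M W) (HD : HeckeData cs) (w : W) : K :=
  ∑ᶠ y : W, if BruhatLE cs y w then atNegQ (HD.P y w) * (-qK) ^ cs.length y else 0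

/-- `Z^σ_w(q) = Σ_{y ≤ w, y ∈ I_*} P^σ_{y,w}(q) q^{ℓ(y)} ((q−1)/(q+1))^{φ(y)}`. -/
def Zsig (cs : CoxeterSystem M W) (D : AffineData cs) (LD : LVData cs D.st) (w : W) : K :=
  ∑ᶠ y : W, if BruhatLE cs y w ∧ D.st y = y⁻¹ then
    toK (LD.Psig y w) * qK ^ cs.length y * ((qK - 1) / (qK + 1)) ^ D.phi y else 0

section
/-! ## Auxiliary material: the inversion cocycle -/

/-- The action of a simple reflection on `W × ℤ/2`. -/
def simpPerm (cs : CoxeterSystem M W) (i : B) : Equiv.Perm (W × ZMod 2) where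
  toFun p := (cs.simple i * p.1 * cs.simple i, p.2 + if p.1 = cs.simple i then 1 else 0)
  invFun p := (cs.simple i * p.1 * cs.simple i, p.2 + if p.1 = cs.simple i then 1 else 0)
  left_inv := by
    rintro ⟨x, e⟩
    have h : cs.simple i * x * cs.simple i = cs.simple i ↔ x = cs.simple i := by
      constructor
      · intro h
        have := congrArg (fun y => cs.simple i * y * cs.simple i) h
        simpa [mul_assoc] using this
      · rintro rfl; simp
    ext
    · simp [mul_assoc]
    · simp only [h]
      split_ifs
      · rw [add_assoc]; simp [show (1 : ZMod 2) + 1 = 0 from rfl]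
      · simp
  right_inv := by
    rintro ⟨x, e⟩
    have h : cs.simple i * x * cs.simple i = cs.simple i ↔ x = cs.simple i := by
      constructor
      · intro h
        have := congrArg (fun y => cs.simple i * y * cs.simple i) h
        simpa [mul_assoc] using this
      · rintro rfl; simp
    ext
    · simp [mul_assoc]
    · simp only [h]
      split_ifs
      · rw [add_assoc]; simp [show (1 : ZMod 2) + 1 = 0 from rfl]
      · simp

theorem simpPerm_pow (cs : CoxeterSystem M W) (i j : B) (k : ℕ) (p : W × ZMod 2) :
    ((simpPerm cs i * simpPerm cs j) ^ k) p =
      ((cs.simple i * cs.simple j) ^ k * p.1 * ((cs.simple i * cs.simple j) ^ k)⁻¹,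
        p.2 + ∑ l ∈ Finset.range (2 * k),
          if p.1 = cs.simple j * (cs.simple i * cs.simple j) ^ l then 1 else 0) := by
  induction k with
  | zero => simp
  | succ k ih =>
    rw [pow_succ', Equiv.Perm.mul_apply, ih, Equiv.Perm.mul_apply]
    set c := cs.simple i * cs.simple j with hc
    have hjc : ∀ l : ℕ, cs.simple j * c ^ l = (c ^ l)⁻¹ * cs.simple j := by
      intro l
      induction l with
      | zero => simp
      | succ l ihl =>
        have hc1 : cs.simple j * c = c⁻¹ * cs.simple j := by simp [hc, mul_assoc]
        rw [pow_succ, ← mul_assoc, ihl, mul_assoc, hc1, ← mul_assoc, ← mul_inv_rev, ← pow_succ',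
          pow_succ]
    have h1 : (c ^ k * p.1 * (c ^ k)⁻¹ = cs.simple j) ↔ p.1 = cs.simple j * c ^ (2 * k) := by
      rw [two_mul, pow_add, ← mul_assoc, hjc]
      constructor
      · intro h; rw [← h]; group
      · intro h; rw [h]; group
    have h2 : (cs.simple j * (c ^ k * p.1 * (c ^ k)⁻¹) * cs.simple j = cs.simple i) ↔
        p.1 = cs.simple j * c ^ (2 * k + 1) := by
      have e1 : cs.simple j * c ^ (2 * k + 1) =
          (c ^ k)⁻¹ * (cs.simple j * cs.simple i * cs.simple j) * c ^ k := by
        rw [show 2 * k + 1 = k + (1 + k) by ring, pow_add, ← mul_assoc, hjc, pow_add, pow_one, hc]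
        simp [mul_assoc]
      rw [e1]
      constructor
      · intro h; rw [← h]; simp [mul_assoc]
      · intro h; rw [h]; simp [mul_assoc]
    rw [show 2 * (k + 1) = 2 * k + 1 + 1 by ring, Finset.sum_range_succ, Finset.sum_range_succ]
    ext
    · simp [simpPerm, pow_succ', mul_assoc, hc]
    · simp only [simpPerm, Equiv.coe_fn_mk, h1, h2]
      ring

theorem simpPerm_liftable (cs : CoxeterSystem M W) : M.IsLiftable (simpPerm cs) := by
  intro i j
  ext1 p
  rw [simpPerm_pow]
  have hm : (cs.simple i * cs.simple j) ^ (M i j) = 1 := cs.simple_mul_simple_pow i j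
  have : ∑ l ∈ Finset.range (2 * M i j),
      (if p.1 = cs.simple j * (cs.simple i * cs.simple j) ^ l then (1 : ZMod 2) else 0) = 0 := by
    rw [two_mul, Finset.sum_range_add]
    simp only [pow_add, hm, one_mul]
    exact CharTwo.add_self_eq_zero _
  rw [this, hm]
  simp

/-- The permutation representation of `W` on `W × ℤ/2`. -/
def permRep (cs : CoxeterSystem M W) : W →* Equiv.Perm (W × ZMod 2) :=
  cs.lift ⟨simpPerm cs, simpPerm_liftable cs⟩

theorem permRep_simple (cs : CoxeterSystem M W) (i : B) : permRep cs (cs.simple i) = simpPerm cs i :=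
  cs.lift_apply_simple (simpPerm_liftable cs) i

/-- The inversion cocycle: `nn cs w t = 1` iff `t` is a left inversion of `w`. -/
def nn (cs : CoxeterSystem M W) (w t : W) : ZMod 2 := (permRep cs w⁻¹ (t, 0)).2

theorem permRep_apply (cs : CoxeterSystem M W) (w x : W) (e : ZMod 2) :
    permRep cs w (x, e) = (w * x * w⁻¹, e + nn cs w⁻¹ x) := by
  unfold nn
  rw [inv_inv]
  induction w using cs.simple_induction_left generalizing x e with
  | one => simp
  | mul_simple_left w i ih =>
    simp only [map_mul, Equiv.Perm.mul_apply]
    rw [ih, ih x 0, permRep_simple]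
    ext
    · simp [simpPerm, mul_assoc]
    · simp [simpPerm, add_assoc]

variable (cs : CoxeterSystem M W)

theorem nn_mul (u w t : W) : nn cs (u * w) t = nn cs u t + nn cs w (u⁻¹ * t * u) := by
  have : permRep cs (u * w)⁻¹ (t, 0) = permRep cs w⁻¹ (permRep cs u⁻¹ (t, 0)) := by
    rw [mul_inv_rev, map_mul]; rfl
  rw [permRep_apply, permRep_apply, permRep_apply] at this
  simpa using congrArg Prod.snd this

theorem nn_one (t : W) : nn cs 1 t = 0 := by simp [nn]

theorem nn_simple (i : B) (t : W) : nn cs (cs.simple i) t = if t = cs.simple i then 1 else 0 := by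
  simp [nn, permRep_simple, simpPerm]

theorem zmod2_cases (x : ZMod 2) : x = 0 ∨ x = 1 := by
  revert x; decide

theorem nn_inv (w t : W) : nn cs w⁻¹ (w⁻¹ * t * w) = nn cs w t := by
  have := nn_mul cs w w⁻¹ t
  rw [mul_inv_cancel, nn_one] at this
  rcases zmod2_cases (nn cs w t) with h | h <;>
  rcases zmod2_cases (nn cs w⁻¹ (w⁻¹ * t * w)) with h' | h' <;> rw [h, h'] at this ⊢ <;> revert this <;> decide

theorem nn_refl {t : W} (ht : cs.IsReflection t) : nn cs t t = 1 := by
  obtain ⟨w, i, rfl⟩ := ht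
  have h1 := nn_inv cs w (w * cs.simple i * w⁻¹)
  rw [show w⁻¹ * (w * cs.simple i * w⁻¹) * w = cs.simple i by group] at h1
  rw [nn_mul, nn_mul, nn_simple, show w⁻¹ * (w * cs.simple i * w⁻¹) * w = cs.simple i by group,
    show (w * cs.simple i)⁻¹ * (w * cs.simple i * w⁻¹) * (w * cs.simple i) = cs.simple i by group,
    h1, if_pos rfl, add_right_comm, CharTwo.add_self_eq_zero, zero_add]

theorem nn_finite (w : W) : {t | nn cs w t ≠ 0}.Finite := by
  induction w using cs.simple_induction_left with
  | one => simp [nn_one]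
  | mul_simple_left w i ih =>
    have h2 : {t | nn cs w ((cs.simple i)⁻¹ * t * cs.simple i) ≠ 0}.Finite := by
      refine Set.Finite.preimage (f := fun t => (cs.simple i)⁻¹ * t * cs.simple i) ?_ ih
      intro a _ b _ h
      simpa using h
    refine ((Set.finite_singleton (cs.simple i)).union h2).subset ?_
    intro t ht
    by_contra hcon
    simp only [Set.mem_union, Set.mem_singleton_iff, Set.mem_ofPred_eq, not_or, not_not] at hcon
    apply ht
    rw [nn_mul, nn_simple, if_neg hcon.1, hcon.2, add_zero]

theorem exchange (ω : List B) (t : W) (h : nn cs (cs.wordProd ω) t ≠ 0) :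
    ∃ j < ω.length, t * cs.wordProd ω = cs.wordProd (ω.eraseIdx j) := by
  induction ω generalizing t with
  | nil => simp [nn_one] at h
  | cons i ω ih =>
    rw [cs.wordProd_cons, nn_mul, nn_simple] at h
    by_cases hti : t = cs.simple i
    · refine ⟨0, by simp, ?_⟩
      simp [hti, cs.wordProd_cons]
    · rw [if_neg hti, zero_add] at h
      obtain ⟨j, hj, e⟩ := ih _ h
      refine ⟨j + 1, by simpa using hj, ?_⟩
      rw [List.eraseIdx_cons_succ, cs.wordProd_cons, cs.wordProd_cons, ← e]
      simp [mul_assoc]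

theorem nn_isReflection {w t : W} (h : nn cs w t ≠ 0) : cs.IsReflection t := by
  induction w using cs.simple_induction_left generalizing t with
  | one => simp [nn_one] at h
  | mul_simple_left w i ih =>
    rw [nn_mul, nn_simple] at h
    by_cases hti : t = cs.simple i
    · rw [hti]; exact cs.isReflection_simple i
    · rw [if_neg hti, zero_add] at h
      have := (ih h).conj (cs.simple i)
      simpa [mul_assoc] using this

theorem nn_length {w t : W} (h : nn cs w t ≠ 0) : cs.length (t * w) < cs.length w := by
  obtain ⟨ω, hω, rfl⟩ := cs.exists_isReduced w
  obtain ⟨j, hj, e⟩ := exchange cs ω t h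
  rw [e, hω.eq]
  refine lt_of_le_of_lt (cs.length_wordProd_le _) ?_
  rw [List.length_eraseIdx_of_lt hj]
  omega

theorem nn_length_iff {w t : W} (ht : cs.IsReflection t) :
    nn cs w t ≠ 0 ↔ cs.length (t * w) < cs.length w := by
  refine ⟨nn_length cs, fun h h0 => ?_⟩
  have : nn cs (t * w) t ≠ 0 := by
    rw [nn_mul, nn_refl cs ht, show t⁻¹ * t * t = t by simp, h0]; decide
  have h2 := nn_length cs this
  rw [← mul_assoc, ht.mul_self, one_mul] at h2
  omega

theorem reflection_ne_one {t : W} (ht : cs.IsReflection t) : t ≠ 1 := by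
  rintro rfl
  have := nn_refl cs ht
  rw [nn_one] at this
  exact absurd this (by decide)

/-! ### Parabolic subgroups -/

theorem exists_word_of_mem {I : Set W} (hI : I ⊆ Set.range cs.simple) {v : W}
    (hv : v ∈ Subgroup.closure I) :
    ∃ ω : List B, (∀ i ∈ ω, cs.simple i ∈ I) ∧ v = cs.wordProd ω := by
  induction hv using Subgroup.closure_induction with
  | mem x hx =>
    obtain ⟨i, rfl⟩ := hI hx
    exact ⟨[i], by simpa using hx, by simp⟩
  | one => exact ⟨[], by simp, by simp⟩
  | mul x y _ _ hx hy =>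
    obtain ⟨a, ha, rfl⟩ := hx
    obtain ⟨b, hb, rfl⟩ := hy
    refine ⟨a ++ b, ?_, by rw [cs.wordProd_append]⟩
    intro i hi
    rcases List.mem_append.1 hi with h | h
    · exact ha i h
    · exact hb i h
  | inv x _ hx =>
    obtain ⟨a, ha, rfl⟩ := hx
    exact ⟨a.reverse, by simpa using ha, by simp⟩

theorem wordProd_mem {I : Set W} {ω : List B} (h : ∀ i ∈ ω, cs.simple i ∈ I) :
    cs.wordProd ω ∈ Subgroup.closure I := by
  apply Subgroup.list_prod_mem
  intro x hx
  obtain ⟨i, hi, rfl⟩ := List.mem_map.1 hx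
  exact Subgroup.subset_closure (h i hi)

theorem exists_descent {I : Set W} (hI : I ⊆ Set.range cs.simple) {v : W}
    (hv : v ∈ Subgroup.closure I) (h1 : v ≠ 1) : ∃ s ∈ I, nn cs v s ≠ 0 := by
  obtain ⟨ω₀, hω₀⟩ := exists_word_of_mem cs hI hv
  by_contra! hcon
  have key : ∀ n : ℕ, ∀ ω : List B, ω.length = n → (∀ i ∈ ω, cs.simple i ∈ I) →
      v ≠ cs.wordProd ω := by
    intro n
    induction n using Nat.strong_induction_on with
    | _ n ih =>
      intro ω hn hω e
      match ω with
      | [] => exact h1 (by simpa using e)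
      | i :: ω =>
        have h0 := hcon _ (hω i (by simp))
        rw [e, cs.wordProd_cons, nn_mul, nn_simple, if_pos rfl] at h0
        have h2 : nn cs (cs.wordProd ω) (cs.simple i) ≠ 0 := by
          intro h3
          simp [h3] at h0
        obtain ⟨j, hj, e2⟩ := exchange cs ω _ h2
        refine ih (ω.eraseIdx j).length ?_ (ω.eraseIdx j) rfl ?_ ?_
        · rw [List.length_eraseIdx_of_lt hj]
          simp at hn
          omega
        · intro k hk
          exact hω k (by simp [List.mem_of_mem_eraseIdx hk])
        · rw [e, cs.wordProd_cons, e2]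
  exact key _ ω₀ rfl hω₀.1 hω₀.2

theorem mem_of_nn {I : Set W} (hI : I ⊆ Set.range cs.simple) {v t : W}
    (hv : v ∈ Subgroup.closure I) (h : nn cs v t ≠ 0) : t ∈ Subgroup.closure I := by
  obtain ⟨ω, hω, rfl⟩ := exists_word_of_mem cs hI hv
  obtain ⟨j, hj, e⟩ := exchange cs ω t h
  have : cs.wordProd (ω.eraseIdx j) ∈ Subgroup.closure I :=
    wordProd_mem cs fun k hk => hω k (List.mem_of_mem_eraseIdx hk)
  rw [← e] at this
  exact (Subgroup.mul_mem_cancel_right _ hv).1 this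

theorem exists_decomp (I : Set W) (w : W) :
    ∃ v ∈ Subgroup.closure I, ∀ t ∈ Subgroup.closure I, nn cs (v⁻¹ * w) t = 0 := by
  obtain ⟨v, hv, hmin⟩ := WellFounded.has_min (measure (fun v => cs.length (v⁻¹ * w))).wf
    (Subgroup.closure I : Set W) ⟨1, Subgroup.one_mem _⟩
  refine ⟨v, hv, fun t ht => ?_⟩
  by_contra h
  have hr := nn_isReflection cs h
  have h2 := nn_length cs h
  refine hmin (v * t) (Subgroup.mul_mem _ hv ht) ?_
  show cs.length ((v * t)⁻¹ * w) < cs.length (v⁻¹ * w)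
  rw [mul_inv_rev, hr.inv, mul_assoc]
  exact h2

theorem nn_eq_zero_of_simple {I : Set W} (hI : I ⊆ Set.range cs.simple) {w : W}
    (h : ∀ s ∈ I, nn cs w s = 0) : ∀ t ∈ Subgroup.closure I, nn cs w t = 0 := by
  obtain ⟨v, hv, hy⟩ := exists_decomp cs I w
  have h1 : v = 1 := by
    by_contra h1
    obtain ⟨s, hs, hn⟩ := exists_descent cs hI hv h1
    have h2 := h s hs
    rw [show w = v * (v⁻¹ * w) by group, nn_mul,
      hy _ (Subgroup.mul_mem _ (Subgroup.mul_mem _ (Subgroup.inv_mem _ hv)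
        (Subgroup.subset_closure hs)) hv), add_zero] at h2
    exact hn h2
  subst h1
  simpa using hy

theorem eq_one_of_nn {w : W} (h : ∀ t, nn cs w t = 0) : w = 1 := by
  by_contra h1
  have hm : w ∈ Subgroup.closure (Set.range cs.simple) := by
    rw [cs.subgroup_closure_range_simple]; trivial
  obtain ⟨s, -, hn⟩ := exists_descent cs subset_rfl hm h1
  exact hn (h s)

theorem simple_mem_closure {I : Set W} (hI : I ⊆ Set.range cs.simple) {s : W}
    (hs : s ∈ Set.range cs.simple) (h : s ∈ Subgroup.closure I) : s ∈ I := by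
  obtain ⟨i, rfl⟩ := hs
  obtain ⟨k, hk, hn⟩ := exists_descent cs hI h (reflection_ne_one cs (cs.isReflection_simple i))
  rw [nn_simple] at hn
  have : k = cs.simple i := by
    by_contra hc
    simp [hc] at hn
  rwa [← this]

/-- The longest element of a finite parabolic subgroup. -/
theorem exists_longest {I : Set W} (hI : I ⊆ Set.range cs.simple)
    (hfin : (Subgroup.closure I : Set W).Finite) :
    ∃ w ∈ Subgroup.closure I,
      (∀ t ∈ Subgroup.closure I, cs.IsReflection t → nn cs w t = 1) ∧ w * w = 1 ∧
      ∀ k ∈ I, w * k * w⁻¹ ∈ I := by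
  obtain ⟨w, hw, hmax⟩ := Set.exists_max_image _ cs.length hfin ⟨1, Subgroup.one_mem _⟩
  have hN : ∀ t ∈ Subgroup.closure I, cs.IsReflection t → nn cs w t = 1 := by
    intro t ht hr
    rcases zmod2_cases (nn cs w t) with h | h
    · exfalso
      have h1 : ¬ cs.length (t * w) < cs.length w := by
        rw [← nn_length_iff cs hr]; simpa using h
      have h2 := hmax (t * w) (Subgroup.mul_mem _ ht hw)
      exact hr.length_mul_right_ne w (by omega)
    · exact h
  have hN0 : ∀ v ∈ Subgroup.closure I, ∀ t, ¬ (t ∈ Subgroup.closure I ∧ cs.IsReflection t) →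
      nn cs v t = 0 := by
    intro v hv t ht
    by_contra h
    exact ht ⟨mem_of_nn cs hI hv h, nn_isReflection cs h⟩
  have conj_iff : ∀ v ∈ Subgroup.closure I, ∀ t,
      (v⁻¹ * t * v ∈ Subgroup.closure I ∧ cs.IsReflection (v⁻¹ * t * v)) ↔
      (t ∈ Subgroup.closure I ∧ cs.IsReflection t) := by
    intro v hv t
    rw [Subgroup.mul_mem_cancel_right _ hv, Subgroup.mul_mem_cancel_left _ (Subgroup.inv_mem _ hv)]
    have := cs.isReflection_conj_iff v⁻¹ t
    rw [inv_inv] at this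
    rw [this]
  have hww : w * w = 1 := by
    apply eq_one_of_nn cs
    intro t
    rw [nn_mul]
    by_cases ht : t ∈ Subgroup.closure I ∧ cs.IsReflection t
    · have h2 := (conj_iff w hw t).2 ht
      rw [hN t ht.1 ht.2, hN _ h2.1 h2.2]; decide
    · have h2 := (not_congr (conj_iff w hw t)).2 ht
      rw [hN0 w hw t ht, hN0 w hw _ h2]; decide
  refine ⟨w, hw, hN, hww, fun k hk => ?_⟩
  have hkm : k ∈ Subgroup.closure I := Subgroup.subset_closure hk
  have hm : w * k * w⁻¹ ∈ Subgroup.closure I :=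
    Subgroup.mul_mem _ (Subgroup.mul_mem _ hw hkm) (Subgroup.inv_mem _ hw)
  obtain ⟨i, rfl⟩ := hI hk
  have hr : cs.IsReflection (w * cs.simple i * w⁻¹) := (cs.isReflection_simple i).conj w
  obtain ⟨s, hs, hn⟩ := exists_descent cs hI hm (reflection_ne_one cs hr)
  have hsr : cs.IsReflection s := nn_isReflection cs hn
  have hsm : s ∈ Subgroup.closure I := Subgroup.subset_closure hs
  have hwi : w⁻¹ = w := by rw [inv_eq_iff_mul_eq_one]; exact hww
  have a1 := (conj_iff w hw s).2 ⟨hsm, hsr⟩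
  have a2 := (conj_iff _ (Subgroup.mul_mem _ hw hkm) s).2 ⟨hsm, hsr⟩
  have hs2 : w⁻¹ * s * w = cs.simple i := by
    by_contra hc
    apply hn
    rw [nn_mul, nn_mul, nn_simple, if_neg hc, hN s hsm hsr, hwi]
    rw [hN _ a2.1 a2.2]
    decide
  have : w * cs.simple i * w⁻¹ = s := by rw [← hs2]; group
  rw [this]; exact hs

end


/-! ## Height functions: abstract part -/

/-- The signed count of sign changes of `χ` under translation by `g`. -/
def hgt {Q : Type} [CommGroup Q] (χ : Q → ℤ) (g : Q) : ℤ := ∑ᶠ q, (χ (q * g) - χ q)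

theorem hgt_mul {Q : Type} [CommGroup Q] {χ : Q → ℤ}
    (hfin : ∀ g, {q | χ (q * g) ≠ χ q}.Finite) (g h : Q) :
    hgt χ (g * h) = hgt χ g + hgt χ h := by
  unfold hgt
  have e1 : ∑ᶠ q, (χ (q * g) - χ q) = ∑ᶠ q, (χ (q * h * g) - χ (q * h)) :=
    (finsum_comp_equiv (Equiv.mulRight h) (f := fun q => χ (q * g) - χ q)).symm
  rw [e1, ← finsum_add_distrib]
  · apply finsum_congr
    intro q
    rw [mul_assoc q h g, mul_comm h g]
    ring
  · have := Set.Finite.preimage (f := fun q => q * h) (mul_left_injective h).injOn (hfin g)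
    refine this.subset ?_
    intro q hq
    simp only [Function.mem_support, ne_eq, sub_eq_zero] at hq
    exact hq
  · refine (hfin h).subset ?_
    intro q hq
    simp only [Function.mem_support, ne_eq, sub_eq_zero] at hq
    exact hq

theorem hgt_one {Q : Type} [CommGroup Q] (χ : Q → ℤ) : hgt χ 1 = 0 := by
  simp [hgt]

theorem hgt_pow {Q : Type} [CommGroup Q] {χ : Q → ℤ}
    (hfin : ∀ g, {q | χ (q * g) ≠ χ q}.Finite) (g : Q) (n : ℕ) :
    hgt χ (g ^ n) = n * hgt χ g := by
  induction n with
  | zero => simp [hgt_one]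
  | succ n ih =>
    rw [pow_succ, hgt_mul hfin, ih]
    push_cast
    ring

theorem hgt_pos {Q : Type} [CommGroup Q] {χ : Q → ℤ}
    (hfin : ∀ g, {q | χ (q * g) ≠ χ q}.Finite) (h01 : ∀ q, χ q = 0 ∨ χ q = 1) (ρ : Q)
    (hρ : ∀ q, ∃ b : ℕ, ∀ j ≥ b, χ (q * ρ ^ j) = 1 ∧ χ (q * (ρ ^ j)⁻¹) = 0) :
    0 < hgt χ ρ := by
  choose b hb using hρ
  obtain ⟨b0, hb0⟩ := ((hfin ρ).image b).bddAbove
  have hF : ∀ q, χ (q * ρ) ≠ χ q → ∀ j ≥ b0, χ (q * ρ ^ j) = 1 ∧ χ (q * (ρ ^ j)⁻¹) = 0 := by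
    intro q hq j hj
    exact hb q j (le_trans (hb0 ⟨q, hq, rfl⟩) hj)
  set N := 2 * (b0 + 1) with hN
  have hmono : ∀ q, 0 ≤ χ (q * ρ ^ N) - χ q := by
    intro q
    by_contra hneg
    have hq1 : χ q = 1 := by rcases h01 q with h | h <;> rcases h01 (q * ρ ^ N) with h' | h' <;> omega
    have hq2 : χ (q * ρ ^ N) = 0 := by
      rcases h01 q with h | h <;> rcases h01 (q * ρ ^ N) with h' | h' <;> omega
    have : ∃ i < N, χ (q * ρ ^ i * ρ) ≠ χ (q * ρ ^ i) := by
      by_contra! hcon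
      have : ∀ i ≤ N, χ (q * ρ ^ i) = 1 := by
        intro i
        induction i with
        | zero => intro _; simpa using hq1
        | succ i ih =>
          intro hi
          rw [pow_succ, ← mul_assoc, hcon i (by omega), ih (by omega)]
      have := this N le_rfl
      omega
    obtain ⟨i, hi, hne⟩ := this
    by_cases hib : b0 ≤ i
    · have := (hF _ hne i hib).2
      rw [mul_inv_cancel_right] at this
      omega
    · have := (hF _ hne (N - i) (by omega)).1
      rw [mul_assoc, ← pow_add, show i + (N - i) = N by omega] at this
      omega
  have hsome : ∃ q, 0 < χ (q * ρ ^ N) - χ q := by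
    by_contra! hcon
    have heq : ∀ q, χ (q * ρ ^ N) = χ q := fun q => by
      have := hmono q; have := hcon q; omega
    have heq2 : ∀ k : ℕ, ∀ q, χ (q * (ρ ^ N) ^ k) = χ q := by
      intro k
      induction k with
      | zero => simp
      | succ k ih => intro q; rw [pow_succ, ← mul_assoc, heq, ih]
    have h1 := hb 1 (N * b 1) (by nlinarith [Nat.zero_le (b 1)])
    have h2 := heq2 (b 1) 1
    have h3 := heq2 (b 1) (1 * (ρ ^ (N * b 1))⁻¹)
    rw [← pow_mul] at h2 h3
    rw [inv_mul_cancel_right] at h3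
    rw [h1.1] at h2
    rw [h1.2] at h3
    omega
  have hpos : 0 < hgt χ (ρ ^ N) := by
    unfold hgt
    have hs : (Function.support fun q => χ (q * ρ ^ N) - χ q).Finite := by
      refine (hfin (ρ ^ N)).subset ?_
      intro q hq
      simp only [Function.mem_support, ne_eq, sub_eq_zero] at hq
      exact hq
    obtain ⟨q, hq⟩ := hsome
    exact finsum_pos (fun q => hmono q) ⟨q, hq⟩ hs
  rw [hgt_pow hfin] at hpos
  exact pos_of_mul_pos_right hpos (by positivity)

theorem exists_height {G : Type} [CommGroup G] (C : Subgroup G) (χ : G → ℤ)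
    (h01 : ∀ q, χ q = 0 ∨ χ q = 1) (hinv : ∀ g, ∀ c ∈ C, χ (g * c) = χ g)
    (hfin : ∀ g, ∃ F : Set (G ⧸ C), F.Finite ∧ ∀ q : G, χ (q * g) ≠ χ q → (q : G ⧸ C) ∈ F) :
    ∃ n : G → ℤ, (∀ g h, n (g * h) = n g + n h) ∧ (∀ c ∈ C, n c = 0) ∧
      ∀ ρ : G, (∀ q, ∃ b : ℕ, ∀ j ≥ b, χ (q * ρ ^ j) = 1 ∧ χ (q * (ρ ^ j)⁻¹) = 0) → 0 < n ρ := by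
  let χ' : G ⧸ C → ℤ := fun q => Quotient.liftOn' q χ (by
    intro a b hab
    rw [QuotientGroup.leftRel_apply] at hab
    have := hinv a _ hab
    rw [mul_inv_cancel_left] at this
    exact this.symm)
  have hχ : ∀ g : G, χ' (g : G ⧸ C) = χ g := fun g => rfl
  have hfin' : ∀ g, {q | χ' (q * g) ≠ χ' q}.Finite := by
    intro g
    induction g using QuotientGroup.induction_on with
    | H g =>
      obtain ⟨F, hF, hF2⟩ := hfin g
      refine hF.subset ?_
      intro q hq
      induction q using QuotientGroup.induction_on with
      | H q => exact hF2 q hq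
  refine ⟨fun g => hgt χ' (g : G ⧸ C), ?_, ?_, ?_⟩
  · intro g h
    beta_reduce
    rw [QuotientGroup.mk_mul]
    exact hgt_mul hfin' _ _
  · intro c hc
    beta_reduce
    rw [(QuotientGroup.eq_one_iff c).2 hc]
    exact hgt_one _
  · intro ρ h
    refine hgt_pos hfin' ?_ _ ?_
    · intro q
      induction q using QuotientGroup.induction_on with
      | H q => exact h01 q
    · intro q
      induction q using QuotientGroup.induction_on with
      | H q => exact h q



/-! ## Translations and reflections -/

namespace AffineData

section Lattice

variable {cs : CoxeterSystem M W} (D : AffineData cs)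

theorem lam_conj {a : W} (ha : a ∈ D.Lam) (w : W) : w * a * w⁻¹ ∈ D.Lam :=
  D.hLam_normal.conj_mem a ha w

theorem lam_conj' {a : W} (ha : a ∈ D.Lam) (w : W) : w⁻¹ * a * w ∈ D.Lam := by
  have := D.lam_conj ha w⁻¹
  rwa [inv_inv] at this

theorem lam_commute {a b : W} (ha : a ∈ D.Lam) (hb : b ∈ D.Lam) : Commute a b :=
  D.hLam_comm a ha b hb

theorem mem_lam_of_comm {x : W} (h : ∀ a ∈ D.Lam, a * x = x * a) : x ∈ D.Lam := by
  rw [D.hLam_mem]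
  have := D.hLam_index
  refine (Set.finite_range (fun q : W ⧸ D.Lam => q.out * x * (q.out)⁻¹)).subset ?_
  intro y hy
  obtain ⟨c, rfl⟩ := isConj_iff.1 hy
  refine ⟨(c : W ⧸ D.Lam), ?_⟩
  obtain ⟨l, hl⟩ := QuotientGroup.mk_out_eq_mul D.Lam c
  beta_reduce
  rw [hl]
  have := h l l.2
  rw [mul_inv_rev, mul_assoc c, this]
  group

theorem lam_pow_inj {a b : W} (ha : a ∈ D.Lam) (hb : b ∈ D.Lam) {k : ℕ} (hk : k ≠ 0)
    (h : a ^ k = b ^ k) : a = b := by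
  have h1 : (⟨a, ha⟩ : D.Lam) ^ k = ⟨b, hb⟩ ^ k := Subtype.ext h
  have h2 := congrArg D.freeIso h1
  rw [map_pow, map_pow] at h2
  have h3 := congrArg Multiplicative.toAdd h2
  rw [toAdd_pow, toAdd_pow] at h3
  have h4 := D.freeIso.injective (Multiplicative.toAdd.injective (smul_right_injective _ hk h3))
  exact congrArg Subtype.val h4

theorem refl_notMem {t : W} (ht : cs.IsReflection t) : t ∉ D.Lam := by
  intro h
  refine reflection_ne_one cs ht (D.lam_pow_inj h D.Lam.one_mem (k := 2) two_ne_zero ?_)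
  rw [pow_two, ht.mul_self, one_pow]

theorem exists_not_comm {t : W} (ht : cs.IsReflection t) : ∃ a ∈ D.Lam, a * t ≠ t * a := by
  by_contra! h
  exact D.refl_notMem ht (D.mem_lam_of_comm h)

theorem comm_of_pow_comm {a x : W} (ha : a ∈ D.Lam) {k : ℕ} (hk : k ≠ 0)
    (h : a ^ k * x = x * a ^ k) : a * x = x * a := by
  have : x * a * x⁻¹ = a := by
    refine D.lam_pow_inj (D.lam_conj ha x) ha hk ?_
    rw [conj_pow, ← h]
    group
  nth_rewrite 1 [← this]
  group

theorem ev_zero {a t : W} (ha : a ∈ D.Lam) (hat : a * t ≠ t * a) (g : W) :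
    ∃ b : ℕ, ∀ j ≥ b, nn cs g ((a ^ j)⁻¹ * t * a ^ j) = 0 := by
  have key : ∀ j k : ℕ, j < k → (a ^ j)⁻¹ * t * a ^ j ≠ (a ^ k)⁻¹ * t * a ^ k := by
    intro j k hjk e
    obtain ⟨d, rfl⟩ := Nat.exists_eq_add_of_lt hjk
    apply hat
    apply D.comm_of_pow_comm ha (k := d + 1) (by omega)
    rw [add_assoc, pow_add] at e
    have e2 := congrArg (fun y => a ^ j * y * (a ^ j)⁻¹) e
    have c := (Commute.refl a).pow_pow j (d + 1)
    rw [c.eq] at e2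
    have e3 : t = (a ^ (d + 1))⁻¹ * t * a ^ (d + 1) := by
      simpa [mul_assoc] using e2
    nth_rewrite 1 [e3]
    group
  have hinj : Function.Injective (fun j : ℕ => (a ^ j)⁻¹ * t * a ^ j) := by
    intro j k e
    rcases lt_trichotomy j k with h | h | h
    · exact absurd e (key j k h)
    · exact h
    · exact absurd e.symm (key k j h)
  obtain ⟨b, hb⟩ := ((nn_finite cs g).preimage hinj.injOn).bddAbove
  refine ⟨b + 1, fun j hj => ?_⟩
  by_contra hne
  have := hb (show j ∈ _ from hne)
  omega

theorem nn_comm {κ t : W} (ht : cs.IsReflection t) (hκ : κ ∈ D.Lam) (h : κ * t = t * κ) :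
    nn cs κ t = 0 := by
  obtain ⟨ν, hν, hνt⟩ := D.exists_not_comm ht
  obtain ⟨b, hb⟩ := D.ev_zero hν hνt κ
  have e1 := nn_mul cs κ (ν ^ b) t
  have e2 := nn_mul cs (ν ^ b) κ t
  rw [hb b le_rfl, ← (D.lam_commute hκ (D.Lam.pow_mem hν b)).eq, e1,
    show κ⁻¹ * t * κ = t by rw [mul_assoc, ← h]; group, add_zero] at e2
  exact add_eq_right.1 e2

theorem ev_const {a t : W} (ha : a ∈ D.Lam) (hat : a * t ≠ t * a) :
    ∃ ε : ZMod 2, ∃ b : ℕ, ∀ j ≥ b, nn cs (a ^ j) t = ε := by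
  obtain ⟨b, hb⟩ := D.ev_zero ha hat a
  refine ⟨nn cs (a ^ b) t, b, fun j hj => ?_⟩
  induction j, hj using Nat.le_induction with
  | base => rfl
  | succ j hj ih => rw [pow_succ, nn_mul, hb j hj, add_zero, ih]

theorem inv_not_comm {ρ t : W} (hρ : ρ ∈ D.Lam) (hi : t * ρ * t⁻¹ = ρ⁻¹) (h1 : ρ ≠ 1) :
    ρ * t ≠ t * ρ := by
  intro h
  rw [← h, mul_inv_cancel_right] at hi
  refine h1 (D.lam_pow_inj hρ D.Lam.one_mem (k := 2) two_ne_zero ?_)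
  rw [pow_two, one_pow]
  nth_rewrite 1 [hi]
  group

theorem ev_inv {ρ t : W} (ht : cs.IsReflection t) (hρ : ρ ∈ D.Lam) (hi : t * ρ * t⁻¹ = ρ⁻¹)
    (h1 : ρ ≠ 1) :
    ∃ ε : ZMod 2, ∀ ν ∈ D.Lam, ∃ b : ℕ, ∀ j ≥ b,
      nn cs (ν * ρ ^ j) t = ε ∧ nn cs (ν * (ρ ^ j)⁻¹) t = ε + 1 := by
  have hc := D.inv_not_comm hρ hi h1
  have hi' : t * ρ⁻¹ * t⁻¹ = ρ⁻¹⁻¹ := by rw [← conj_inv, hi]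
  have hc' := D.inv_not_comm (D.Lam.inv_mem hρ) hi' (inv_ne_one.2 h1)
  obtain ⟨ε, b1, hb1⟩ := D.ev_const hρ hc
  refine ⟨ε, fun ν hν => ?_⟩
  obtain ⟨b2, hb2⟩ := D.ev_zero hρ hc ν
  obtain ⟨b3, hb3⟩ := D.ev_zero (D.Lam.inv_mem hρ) hc' ν
  obtain ⟨b4, hb4⟩ := D.ev_zero (D.Lam.inv_mem hρ) hc' t
  refine ⟨max (max b1 b2) (max b3 b4), fun j hj => ?_⟩
  simp only [ge_iff_le, max_le_iff] at hj
  obtain ⟨⟨h1, h2⟩, h3, h4⟩ := hj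
  have hρj := D.Lam.pow_mem hρ j
  constructor
  · rw [(D.lam_commute hν hρj).eq, nn_mul, hb1 j h1, hb2 j h2, add_zero]
  · rw [(D.lam_commute hν (D.Lam.inv_mem hρj)).eq, nn_mul, ← inv_pow, hb3 j h3, add_zero]
    have e : t * ρ ^ j = (ρ⁻¹) ^ j * t := by
      rw [← hi, conj_pow]; group
    have e1 := nn_mul cs t (ρ ^ j) t
    rw [e, nn_mul, hb4 j h4, nn_refl cs ht, show t⁻¹ * t * t = t by group, hb1 j h1] at e1
    rw [← add_zero (nn cs _ t), e1, add_comm]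

end Lattice

end AffineData



/-! ## Height functions attached to reflections -/

namespace AffineData

section Heights

variable {cs : CoxeterSystem M W} (D : AffineData cs)

theorem conj_eq_comm {p q t : W} (hp : p ∈ D.Lam) (hq : q ∈ D.Lam)
    (e : p⁻¹ * t * p = q⁻¹ * t * q) : p⁻¹ * q * t = t * (p⁻¹ * q) := by
  have h1 : t * (p * q⁻¹) = p * q⁻¹ * t := by
    calc t * (p * q⁻¹) = p * (p⁻¹ * t * p) * q⁻¹ := by group
      _ = p * q⁻¹ * t := by rw [e]; group
  have h2 : p⁻¹ * q = (p * q⁻¹)⁻¹ := by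
    rw [mul_inv_rev, inv_inv]
    exact (D.lam_commute hp hq).inv_left.eq
  rw [h2, inv_mul_eq_iff_eq_mul, ← mul_assoc, ← h1, mul_inv_cancel_right]

theorem conj_mul_comm {q c t : W} (hq : q ∈ D.Lam) (hc : c ∈ D.Lam) (h : c * t = t * c) :
    (q * c)⁻¹ * t * (q * c) = q⁻¹ * t * q := by
  rw [(D.lam_commute hq hc).eq, mul_inv_rev]
  calc q⁻¹ * c⁻¹ * t * (c * q) = q⁻¹ * (c⁻¹ * (t * c)) * q := by group
    _ = _ := by rw [← h]; group

theorem height_pre {t : W} (ht : cs.IsReflection t) :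
    ∃ n : D.Lam → ℤ, (∀ g h, n (g * h) = n g + n h) ∧ (∀ c : D.Lam, (c : W) * t = t * c → n c = 0) ∧
      ∀ ρ : D.Lam, (∀ q : D.Lam, ∃ b : ℕ, ∀ j ≥ b, nn cs (q * (ρ : W) ^ j) t = 0 ∧
        nn cs (q * ((ρ : W) ^ j)⁻¹) t = 1) → 0 < n ρ := by
  let : CommGroup D.Lam :=
    { (inferInstance : Group D.Lam) with
      mul_comm := fun a b => Subtype.ext (D.hLam_comm a a.2 b b.2) }
  let C : Subgroup D.Lam :=
    { carrier := {c | (c : W) * t = t * c}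
      one_mem' := by simp
      mul_mem' := by
        intro a b ha hb
        simp only [Set.mem_ofPred_eq, Subgroup.coe_mul] at ha hb ⊢
        rw [mul_assoc, hb, ← mul_assoc, ha, mul_assoc]
      inv_mem' := by
        intro a ha
        simp only [Set.mem_ofPred_eq, Subgroup.coe_inv] at ha ⊢
        rw [inv_mul_eq_iff_eq_mul, ← mul_assoc, ha, mul_inv_cancel_right] }
  have hC : ∀ c : D.Lam, c ∈ C ↔ (c : W) * t = t * c := fun c => Iff.rfl
  let χ : D.Lam → ℤ := fun g => if nn cs g t = 0 then 1 else 0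
  have H1 : ∀ q, χ q = 0 ∨ χ q = 1 := by
    intro q
    by_cases h : nn cs q t = 0
    · right; exact if_pos h
    · left; exact if_neg h
  have H2 : ∀ g, ∀ c ∈ C, χ (g * c) = χ g := by
    intro g c hc
    have : nn cs ((g * c : D.Lam) : W) t = nn cs g t := by
      rw [mul_comm g c, Subgroup.coe_mul, nn_mul, D.nn_comm ht c.2 hc, zero_add, mul_assoc,
        ← (hC c).1 hc, inv_mul_cancel_left]
    show (if nn cs ((g * c : D.Lam) : W) t = 0 then (1 : ℤ) else 0) = _
    rw [this]
  have H3 : ∀ g, ∃ F : Set (D.Lam ⧸ C), F.Finite ∧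
      ∀ q : D.Lam, χ (q * g) ≠ χ q → (q : D.Lam ⧸ C) ∈ F := by
    intro g
    refine ⟨(fun q : D.Lam ⧸ C => ((q.out : D.Lam) : W)⁻¹ * t * (q.out : D.Lam)) ⁻¹'
      {x | nn cs g x ≠ 0}, ?_, ?_⟩
    · refine (nn_finite cs g).preimage ?_
      intro p _ q _ e
      beta_reduce at e
      rw [← QuotientGroup.out_eq' p, ← QuotientGroup.out_eq' q, QuotientGroup.eq, hC]
      exact D.conj_eq_comm (p.out : D.Lam).2 (q.out : D.Lam).2 e
    · intro q hq
      obtain ⟨c, hc⟩ := QuotientGroup.mk_out_eq_mul C q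
      show nn cs g ((((q : D.Lam ⧸ C).out : D.Lam) : W)⁻¹ * t *
        (((q : D.Lam ⧸ C).out : D.Lam) : W)) ≠ 0
      rw [hc, Subgroup.coe_mul, D.conj_mul_comm q.2 c.1.2 ((hC _).1 c.2)]
      intro h0
      apply hq
      show (if nn cs ((q : W) * g) t = 0 then (1 : ℤ) else 0) = if nn cs q t = 0 then 1 else 0
      rw [nn_mul, h0, add_zero]
  obtain ⟨n, h1, h2, h3⟩ := exists_height C χ H1 H2 H3
  refine ⟨n, h1, fun c hc => h2 c hc, fun ρ hρ => h3 ρ fun q => ?_⟩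
  obtain ⟨b, hb⟩ := hρ q
  refine ⟨b, fun j hj => ⟨?_, ?_⟩⟩
  · exact if_pos (hb j hj).1
  · refine if_neg ?_
    have := (hb j hj).2
    show ¬ nn cs (q * ((ρ : W) ^ j)⁻¹) t = 0
    rw [this]; decide

theorem exists_ht {t : W} (ht : cs.IsReflection t) :
    ∃ n : W → ℤ, (∀ a ∈ D.Lam, ∀ b ∈ D.Lam, n (a * b) = n a + n b) ∧
      (∀ a ∈ D.Lam, n a = 0 ↔ a * t = t * a) ∧
      (∀ a ∈ D.Lam, 0 ≤ n a → ∃ b : ℕ, ∀ j ≥ b, nn cs (a ^ j) t = 0) ∧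
      (∀ a ∈ D.Lam, n a < 0 → ∃ b : ℕ, ∀ j ≥ b, nn cs (a ^ j) t = 1) := by
  obtain ⟨n0, h1, h2, h3⟩ := D.height_pre ht
  let n : W → ℤ := fun a => if h : a ∈ D.Lam then n0 ⟨a, h⟩ else 0
  have hn : ∀ a (h : a ∈ D.Lam), n a = n0 ⟨a, h⟩ := fun a h => dif_pos h
  have hmul : ∀ a ∈ D.Lam, ∀ b ∈ D.Lam, n (a * b) = n a + n b := by
    intro a ha b hb
    rw [hn a ha, hn b hb, hn _ (D.Lam.mul_mem ha hb), ← h1]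
    rfl
  have hc : ∀ c ∈ D.Lam, c * t = t * c → n c = 0 := by
    intro c hc h
    rw [hn c hc]; exact h2 _ h
  have hone : n 1 = 0 := hc 1 D.Lam.one_mem (by simp)
  have hinv : ∀ a ∈ D.Lam, n a⁻¹ = - n a := by
    intro a ha
    have := hmul a ha _ (D.Lam.inv_mem ha)
    rw [mul_inv_cancel, hone] at this
    omega
  have hpos : ∀ ρ ∈ D.Lam, t * ρ * t⁻¹ = ρ⁻¹ → ρ ≠ 1 →
      (0 < n ρ ∧ ∃ b : ℕ, ∀ j ≥ b, nn cs (ρ ^ j) t = 0) ∨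
      (n ρ < 0 ∧ ∃ b : ℕ, ∀ j ≥ b, nn cs (ρ ^ j) t = 1) := by
    intro ρ hρ hi hne
    obtain ⟨ε, hε⟩ := D.ev_inv ht hρ hi hne
    have hb : ∃ b : ℕ, ∀ j ≥ b, nn cs (ρ ^ j) t = ε := by
      obtain ⟨b, hb⟩ := hε 1 D.Lam.one_mem
      exact ⟨b, fun j hj => by simpa using (hb j hj).1⟩
    rcases zmod2_cases ε with rfl | rfl
    · left
      refine ⟨?_, hb⟩
      rw [hn ρ hρ]
      apply h3
      intro q
      obtain ⟨b, hb⟩ := hε q q.2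
      exact ⟨b, fun j hj => hb j hj⟩
    · right
      refine ⟨?_, hb⟩
      have : 0 < n ρ⁻¹ := by
        rw [hn _ (D.Lam.inv_mem hρ)]
        apply h3
        intro q
        obtain ⟨b, hb⟩ := hε q q.2
        refine ⟨b, fun j hj => ?_⟩
        have := hb j hj
        simp only [inv_pow, inv_inv]
        exact ⟨this.2, this.1⟩
      rw [hinv ρ hρ] at this
      omega
  have key : ∀ a ∈ D.Lam, a * t ≠ t * a →
      (0 < n a ∧ ∃ b : ℕ, ∀ j ≥ b, nn cs (a ^ j) t = 0) ∨
      (n a < 0 ∧ ∃ b : ℕ, ∀ j ≥ b, nn cs (a ^ j) t = 1) := by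
    intro a ha hat
    have ha' := D.lam_conj ha t
    set a' := t * a * t⁻¹ with ha'e
    have htt : t⁻¹ = t := ht.inv
    have ht2 : t * t = 1 := ht.mul_self
    have hta' : t * a' * t⁻¹ = a := by
      rw [ha'e, show t * (t * a * t⁻¹) * t⁻¹ = (t * t) * a * (t * t)⁻¹ by group, ht2]; group
    have hcm := D.lam_commute ha ha'
    have hκ : a * a' ∈ D.Lam := D.Lam.mul_mem ha ha'
    have hρ : a * a'⁻¹ ∈ D.Lam := D.Lam.mul_mem ha (D.Lam.inv_mem ha')
    have hκt : a * a' * t = t * (a * a') := by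
      have : t * (a * a') * t⁻¹ = a * a' := by
        rw [show t * (a * a') * t⁻¹ = (t * a * t⁻¹) * (t * a' * t⁻¹) by group, hta', ← ha'e, hcm.eq]
      nth_rewrite 1 [← this]
      group
    have hρi : t * (a * a'⁻¹) * t⁻¹ = (a * a'⁻¹)⁻¹ := by
      rw [show t * (a * a'⁻¹) * t⁻¹ = (t * a * t⁻¹) * (t * a' * t⁻¹)⁻¹ by group, hta', ← ha'e]
      group
    have hρ1 : a * a'⁻¹ ≠ 1 := by
      intro h
      apply hat
      have : a = a' := mul_inv_eq_one.1 h
      nth_rewrite 1 [this]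
      rw [ha'e]; group
    have hsq : a ^ 2 = (a * a') * (a * a'⁻¹) := by
      rw [hcm.eq]
      rw [show a' * a * (a * a'⁻¹) = a' * (a * a) * a'⁻¹ by group, ← (hcm.mul_left hcm).eq, mul_inv_cancel_right,
        pow_two]
    have hn2 : 2 * n a = n (a * a'⁻¹) := by
      have e := hmul _ hκ _ hρ
      rw [← hsq, hc _ hκ hκt, pow_two, hmul a ha a ha] at e
      omega
    have hnn2 : ∀ j, nn cs (a ^ (2 * j)) t = nn cs ((a * a'⁻¹) ^ j) t := by
      intro j
      have hκj : Commute ((a * a') ^ j) t := Commute.pow_left hκt j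
      rw [pow_mul, hsq, (D.lam_commute hκ hρ).mul_pow, nn_mul,
        D.nn_comm ht (D.Lam.pow_mem hκ j) hκj.eq, zero_add, mul_assoc, ← hκj.eq,
        inv_mul_cancel_left]
    obtain ⟨ε, b1, hb1⟩ := D.ev_const ha hat
    rcases hpos _ hρ hρi hρ1 with ⟨hp, b2, hb2⟩ | ⟨hp, b2, hb2⟩
    · left
      refine ⟨by omega, b1, fun j hj => ?_⟩
      rw [hb1 j hj, ← hb1 (2 * max b1 b2) (by omega), hnn2, hb2 _ (by omega)]
    · right
      refine ⟨by omega, b1, fun j hj => ?_⟩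
      rw [hb1 j hj, ← hb1 (2 * max b1 b2) (by omega), hnn2, hb2 _ (by omega)]
  refine ⟨n, hmul, fun a ha => ⟨fun h => ?_, hc a ha⟩, fun a ha h => ?_, fun a ha h => ?_⟩
  · by_contra hat
    rcases key a ha hat with h' | h' <;> omega
  · by_cases hat : a * t = t * a
    · refine ⟨0, fun j _ => D.nn_comm ht (D.Lam.pow_mem ha j) ?_⟩
      exact (Commute.pow_left hat j).eq
    · rcases key a ha hat with h' | h'
      · exact h'.2
      · omega
  · have hat : a * t ≠ t * a := fun hat => by have := hc a ha hat; omega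
    rcases key a ha hat with h' | h'
    · omega
    · exact h'.2

/-- The height function attached to a reflection. -/
def ht (t : W) : W → ℤ := if h : cs.IsReflection t then (D.exists_ht h).choose else fun _ => 0

variable {D}

theorem ht_spec {t : W} (h : cs.IsReflection t) :
    (∀ a ∈ D.Lam, ∀ b ∈ D.Lam, D.ht t (a * b) = D.ht t a + D.ht t b) ∧
      (∀ a ∈ D.Lam, D.ht t a = 0 ↔ a * t = t * a) ∧
      (∀ a ∈ D.Lam, 0 ≤ D.ht t a → ∃ b : ℕ, ∀ j ≥ b, nn cs (a ^ j) t = 0) ∧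
      (∀ a ∈ D.Lam, D.ht t a < 0 → ∃ b : ℕ, ∀ j ≥ b, nn cs (a ^ j) t = 1) := by
  have := (D.exists_ht h).choose_spec
  unfold ht
  rw [dif_pos h]
  exact this

theorem ht_mul {t a b : W} (h : cs.IsReflection t) (ha : a ∈ D.Lam) (hb : b ∈ D.Lam) :
    D.ht t (a * b) = D.ht t a + D.ht t b := (ht_spec h).1 a ha b hb

theorem ht_zero_iff {t a : W} (h : cs.IsReflection t) (ha : a ∈ D.Lam) :
    D.ht t a = 0 ↔ a * t = t * a := (ht_spec h).2.1 a ha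

theorem ht_nonneg_ev {t a : W} (h : cs.IsReflection t) (ha : a ∈ D.Lam) (h0 : 0 ≤ D.ht t a) :
    ∃ b : ℕ, ∀ j ≥ b, nn cs (a ^ j) t = 0 := (ht_spec h).2.2.1 a ha h0

theorem ht_neg_ev {t a : W} (h : cs.IsReflection t) (ha : a ∈ D.Lam) (h0 : D.ht t a < 0) :
    ∃ b : ℕ, ∀ j ≥ b, nn cs (a ^ j) t = 1 := (ht_spec h).2.2.2 a ha h0

theorem ht_one {t : W} (h : cs.IsReflection t) : D.ht t 1 = 0 :=
  (ht_zero_iff h D.Lam.one_mem).2 (by simp)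

theorem ht_inv {t a : W} (h : cs.IsReflection t) (ha : a ∈ D.Lam) :
    D.ht t a⁻¹ = - D.ht t a := by
  have := ht_mul h ha (D.Lam.inv_mem ha)
  rw [mul_inv_cancel, ht_one h] at this
  omega

theorem ht_pow {t a : W} (h : cs.IsReflection t) (ha : a ∈ D.Lam) (n : ℕ) :
    D.ht t (a ^ n) = n * D.ht t a := by
  induction n with
  | zero => simp [ht_one h]
  | succ n ih =>
    rw [pow_succ, ht_mul h (D.Lam.pow_mem ha n) ha, ih]
    push_cast
    ring

theorem ht_zpow {t a : W} (h : cs.IsReflection t) (ha : a ∈ D.Lam) (n : ℤ) :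
    D.ht t (a ^ n) = n * D.ht t a := by
  obtain ⟨m, rfl | rfl⟩ := n.eq_nat_or_neg
  · rw [zpow_natCast, ht_pow h ha]
  · rw [zpow_neg, zpow_natCast, ht_inv h (D.Lam.pow_mem ha m), ht_pow h ha]
    ring

theorem ht_nonneg_of_freq {t a : W} (h : cs.IsReflection t) (ha : a ∈ D.Lam)
    (h0 : ∀ b : ℕ, ∃ j ≥ b, nn cs (a ^ j) t = 0) : 0 ≤ D.ht t a := by
  by_contra hn
  obtain ⟨b, hb⟩ := ht_neg_ev h ha (not_le.1 hn)
  obtain ⟨j, hj, e⟩ := h0 b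
  rw [hb j hj] at e
  exact absurd e (by decide)

theorem ht_neg_of_freq {t a : W} (h : cs.IsReflection t) (ha : a ∈ D.Lam)
    (h0 : ∀ b : ℕ, ∃ j ≥ b, nn cs (a ^ j) t = 1) : D.ht t a < 0 := by
  by_contra hn
  obtain ⟨b, hb⟩ := ht_nonneg_ev h ha (not_lt.1 hn)
  obtain ⟨j, hj, e⟩ := h0 b
  rw [hb j hj] at e
  exact absurd e (by decide)

end Heights

end AffineData



/-! ## Signs of heights -/

namespace AffineData

section Signs

variable {cs : CoxeterSystem M W} {D : AffineData cs}

theorem conj_comm_iff (u a t : W) :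
    (u * a * u⁻¹) * (u * t * u⁻¹) = (u * t * u⁻¹) * (u * a * u⁻¹) ↔ a * t = t * a := by
  have e1 : (u * a * u⁻¹) * (u * t * u⁻¹) = u * (a * t) * u⁻¹ := by group
  have e2 : (u * t * u⁻¹) * (u * a * u⁻¹) = u * (t * a) * u⁻¹ := by group
  rw [e1, e2, mul_left_inj, mul_right_inj]

theorem ht_conj_zero {t a : W} (u : W) (h : cs.IsReflection t) (ha : a ∈ D.Lam) :
    D.ht (u * t * u⁻¹) (u * a * u⁻¹) = 0 ↔ D.ht t a = 0 := by
  rw [ht_zero_iff (h.conj u) (D.lam_conj ha u), ht_zero_iff h ha, conj_comm_iff]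

theorem nn_conj_ev {t a : W} (u : W) (ha : a ∈ D.Lam) (hat : a * t ≠ t * a) :
    ∃ b : ℕ, ∀ j ≥ b, nn cs ((u * a * u⁻¹) ^ j) (u * t * u⁻¹) =
      nn cs u (u * t * u⁻¹) + nn cs (a ^ j) t := by
  obtain ⟨b, hb⟩ := D.ev_zero ha hat u⁻¹
  refine ⟨b, fun j hj => ?_⟩
  rw [conj_pow, mul_assoc, nn_mul, nn_mul, show u⁻¹ * (u * t * u⁻¹) * u = t by group, hb j hj,
    add_zero]

theorem ht_conj_pre {t a : W} (u : W) (h : cs.IsReflection t) (ha : a ∈ D.Lam)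
    (h0 : D.ht t a ≠ 0) :
    (nn cs u (u * t * u⁻¹) = 0 →
      (0 < D.ht t a → 0 < D.ht (u * t * u⁻¹) (u * a * u⁻¹)) ∧
      (D.ht t a < 0 → D.ht (u * t * u⁻¹) (u * a * u⁻¹) < 0)) ∧
    (nn cs u (u * t * u⁻¹) = 1 →
      (0 < D.ht t a → D.ht (u * t * u⁻¹) (u * a * u⁻¹) < 0) ∧
      (D.ht t a < 0 → 0 < D.ht (u * t * u⁻¹) (u * a * u⁻¹))) := by
  have hat : a * t ≠ t * a := fun hat => h0 ((ht_zero_iff h ha).2 hat)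
  have h0' : D.ht (u * t * u⁻¹) (u * a * u⁻¹) ≠ 0 := fun e => h0 ((ht_conj_zero u h ha).1 e)
  obtain ⟨b, hb⟩ := nn_conj_ev (cs := cs) u ha hat
  have up : ∀ ε : ZMod 2, (∃ b, ∀ j ≥ b, nn cs (a ^ j) t = ε) → ∀ b', ∃ j ≥ b',
      nn cs ((u * a * u⁻¹) ^ j) (u * t * u⁻¹) = nn cs u (u * t * u⁻¹) + ε := by
    rintro ε ⟨b1, hb1⟩ b'
    refine ⟨max b' (max b b1), by omega, ?_⟩
    rw [hb _ (by omega), hb1 _ (by omega)]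
  have hP : 0 < D.ht t a → _ := fun hp => up 0 (ht_nonneg_ev h ha hp.le)
  have hN : D.ht t a < 0 → _ := fun hp => up 1 (ht_neg_ev h ha hp)
  have R := h.conj u
  have La := D.lam_conj ha u
  constructor
  · intro e
    rw [e] at hP hN
    refine ⟨fun hp => ?_, fun hp => ?_⟩
    · have := ht_nonneg_of_freq R La (hP hp)
      omega
    · exact ht_neg_of_freq R La (hN hp)
  · intro e
    rw [e] at hP hN
    refine ⟨fun hp => ?_, fun hp => ?_⟩
    · exact ht_neg_of_freq R La (hP hp)
    · have := ht_nonneg_of_freq R La (hN hp)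
      omega

theorem ht_conj0 {t a : W} (u : W) (h : cs.IsReflection t) (ha : a ∈ D.Lam)
    (e : nn cs u (u * t * u⁻¹) = 0) :
    (0 < D.ht t a ↔ 0 < D.ht (u * t * u⁻¹) (u * a * u⁻¹)) ∧
      (D.ht t a < 0 ↔ D.ht (u * t * u⁻¹) (u * a * u⁻¹) < 0) := by
  have hz := ht_conj_zero (D := D) u h ha
  by_cases h0 : D.ht t a = 0
  · have := hz.2 h0; omega
  · have := (ht_conj_pre u h ha h0).1 e
    omega

theorem ht_conj1 {t a : W} (u : W) (h : cs.IsReflection t) (ha : a ∈ D.Lam)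
    (e : nn cs u (u * t * u⁻¹) = 1) :
    (0 < D.ht t a ↔ D.ht (u * t * u⁻¹) (u * a * u⁻¹) < 0) ∧
      (D.ht t a < 0 ↔ 0 < D.ht (u * t * u⁻¹) (u * a * u⁻¹)) := by
  have hz := ht_conj_zero (D := D) u h ha
  by_cases h0 : D.ht t a = 0
  · have := hz.2 h0; omega
  · have := (ht_conj_pre u h ha h0).2 e
    omega

theorem isRefl_of_mem {I : Set W} (hI : I ⊆ Set.range cs.simple) {s : W} (hs : s ∈ I) :
    cs.IsReflection s := by
  obtain ⟨i, rfl⟩ := hI hs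
  exact cs.isReflection_simple i

theorem ev_zero_of_dom {I : Set W} (hI : I ⊆ Set.range cs.simple) {a : W} (ha : a ∈ D.Lam)
    (h : ∀ s ∈ I, 0 ≤ D.ht s a) :
    ∃ b : ℕ, ∀ j ≥ b, ∀ t ∈ Subgroup.closure I, nn cs (a ^ j) t = 0 := by
  have hfin : I.Finite := by
    have := D.finB
    exact (Set.finite_range cs.simple).subset hI
  have h1 : ∀ s, ∃ b : ℕ, s ∈ I → ∀ j ≥ b, nn cs (a ^ j) s = 0 := by
    intro s
    by_cases hs : s ∈ I
    · obtain ⟨b, hb⟩ := ht_nonneg_ev (isRefl_of_mem hI hs) ha (h s hs)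
      exact ⟨b, fun _ => hb⟩
    · exact ⟨0, fun h => absurd h hs⟩
  choose b hb using h1
  obtain ⟨b0, hb0⟩ := (hfin.image b).bddAbove
  refine ⟨b0, fun j hj => nn_eq_zero_of_simple cs hI fun s hs => ?_⟩
  exact hb s hs j (le_trans (hb0 ⟨s, hs, rfl⟩) hj)

theorem dom_closure {I : Set W} (hI : I ⊆ Set.range cs.simple) {a : W} (ha : a ∈ D.Lam)
    (h : ∀ s ∈ I, 0 ≤ D.ht s a) {t : W} (ht : cs.IsReflection t) (htI : t ∈ Subgroup.closure I) :
    0 ≤ D.ht t a := by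
  obtain ⟨b, hb⟩ := ev_zero_of_dom hI ha h
  exact ht_nonneg_of_freq ht ha fun b' => ⟨max b b', by omega, hb _ (by omega) t htI⟩

theorem exists_neg {a : W} (ha : a ∈ D.Lam) (h1 : a ≠ 1) :
    ∃ s ∈ Set.range cs.simple, D.ht s a < 0 := by
  by_contra! h
  obtain ⟨b, hb⟩ := ev_zero_of_dom subset_rfl ha h
  have : a ^ (b + 1) = 1 := eq_one_of_nn cs fun t => hb _ (by omega) t (by
    rw [cs.subgroup_closure_range_simple]; trivial)
  exact h1 (D.lam_pow_inj ha D.Lam.one_mem (k := b + 1) (by omega) (by rw [this, one_pow]))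

theorem exists_dom_conj {I : Set W} (hI : I ⊆ Set.range cs.simple)
    (hfin : (Subgroup.closure I : Set W).Finite) {a : W} (ha : a ∈ D.Lam) :
    ∃ v ∈ Subgroup.closure I, ∀ s ∈ I, 0 ≤ D.ht s (v⁻¹ * a * v) := by
  choose v hv hv2 using fun j : ℕ => exists_decomp cs I (a ^ j)
  obtain ⟨x, hx, hinf⟩ : ∃ x ∈ Subgroup.closure I, ∀ b : ℕ, ∃ j ≥ b, v j = x := by
    by_contra! hcon
    choose b hb using hcon
    let b' : W → ℕ := fun x => if h : x ∈ Subgroup.closure I then b x h else 0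
    obtain ⟨b0, hb0⟩ := (hfin.image b').bddAbove
    have h2 : b (v b0) (hv b0) ≤ b0 := by
      have := hb0 ⟨v b0, hv b0, rfl⟩
      have e : b' (v b0) = b (v b0) (hv b0) := dif_pos (hv b0)
      rwa [e] at this
    exact hb (v b0) (hv b0) b0 h2 rfl
  refine ⟨x, hx, fun s hs => ?_⟩
  have hsr := isRefl_of_mem hI hs
  have La := D.lam_conj' ha x
  by_cases hc : a * (x * s * x⁻¹) = x * s * x⁻¹ * a
  · apply le_of_eq
    symm
    rw [ht_zero_iff hsr La]
    rw [← conj_comm_iff x, show x * (x⁻¹ * a * x) * x⁻¹ = a by group]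
    exact hc
  · obtain ⟨b, hb⟩ := D.ev_zero ha hc x
    refine ht_nonneg_of_freq hsr La fun b' => ?_
    obtain ⟨j, hj, e⟩ := hinf (max b b')
    refine ⟨j, by omega, ?_⟩
    have e1 : (x⁻¹ * a * x) ^ j = x⁻¹ * a ^ j * x := by
      have := conj_pow (i := j) (a := x⁻¹) (b := a)
      rwa [inv_inv] at this
    have h2 := hv2 j s (Subgroup.subset_closure hs)
    rw [e] at h2
    rw [e1, nn_mul, h2, zero_add,
      show (x⁻¹ * a ^ j)⁻¹ * s * (x⁻¹ * a ^ j) = (a ^ j)⁻¹ * (x * s * x⁻¹) * a ^ j by group]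
    exact hb j (by omega)

theorem exists_refl_fixed {I : Set W} (hI : I ⊆ Set.range cs.simple)
    (hfin : (Subgroup.closure I : Set W).Finite) {a u : W} (ha : a ∈ D.Lam)
    (hu : u ∈ Subgroup.closure I) (hu1 : u ≠ 1) (hau : a * u = u * a) :
    ∃ t ∈ Subgroup.closure I, cs.IsReflection t ∧ D.ht t a = 0 := by
  obtain ⟨v, hv, hdom⟩ := exists_dom_conj hI hfin ha
  have Lb := D.lam_conj' ha v
  set b := v⁻¹ * a * v with hb
  set u' := v⁻¹ * u * v with hu'
  have hvi := Subgroup.inv_mem _ hv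
  have hu'm : u' ∈ Subgroup.closure I := Subgroup.mul_mem _ (Subgroup.mul_mem _ hvi hu) hv
  have hu'1 : u' ≠ 1 := by
    intro h
    apply hu1
    have : u = v * u' * v⁻¹ := by rw [hu']; group
    rw [this, h]; group
  have hcomm : b * u' = u' * b := by
    rw [← conj_comm_iff v, hb, hu', show v * (v⁻¹ * a * v) * v⁻¹ = a by group,
      show v * (v⁻¹ * u * v) * v⁻¹ = u by group, hau]
  obtain ⟨s, hs, hn⟩ := exists_descent cs hI hu'm hu'1
  have hn1 : nn cs u' s = 1 := (zmod2_cases _).resolve_left hn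
  have hsr := isRefl_of_mem hI hs
  have hr : cs.IsReflection (u'⁻¹ * s * u') := by
    have := hsr.conj u'⁻¹
    rwa [inv_inv] at this
  have hrm : u'⁻¹ * s * u' ∈ Subgroup.closure I :=
    Subgroup.mul_mem _ (Subgroup.mul_mem _ (Subgroup.inv_mem _ hu'm) (Subgroup.subset_closure hs)) hu'm
  have e1 : u' * (u'⁻¹ * s * u') * u'⁻¹ = s := by group
  have e2 : u' * b * u'⁻¹ = b := by rw [← hcomm]; group
  have hc := ht_conj1 (D := D) u' hr Lb (by rw [e1]; exact hn1)
  rw [e1, e2] at hc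
  have p1 := hdom s hs
  have p2 := dom_closure hI Lb hdom hr hrm
  have hz : D.ht s b = 0 := by omega
  refine ⟨v * s * v⁻¹, Subgroup.mul_mem _ (Subgroup.mul_mem _ hv (Subgroup.subset_closure hs)) hvi,
    hsr.conj v, ?_⟩
  have := (ht_conj_zero v hsr Lb).2 hz
  rwa [show v * b * v⁻¹ = a by rw [hb]; group] at this

theorem exists_regular (H : Subgroup W) (hH : H ≤ D.Lam) {T : Set W} (hT : T.Finite)
    (hr : ∀ t ∈ T, cs.IsReflection t) (h : ∀ t ∈ T, ∃ a ∈ H, D.ht t a ≠ 0) :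
    ∃ a ∈ H, ∀ t ∈ T, D.ht t a ≠ 0 := by
  induction T, hT using Set.Finite.induction_on with
  | empty => exact ⟨1, H.one_mem, by simp⟩
  | @insert t T htT hT ih =>
    obtain ⟨a, ha, hat⟩ := ih (fun t h => hr t (Set.mem_insert_of_mem _ h))
      (fun t h' => h t (Set.mem_insert_of_mem _ h'))
    by_cases h0 : D.ht t a = 0
    · obtain ⟨c, hc, hct⟩ := h t (Set.mem_insert _ _)
      obtain ⟨N, hN⟩ := (hT.image (fun t' => (D.ht t' c).natAbs)).bddAbove
      refine ⟨a ^ (N + 1) * c, H.mul_mem (H.pow_mem ha _) hc, ?_⟩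
      intro t' ht'
      rw [ht_mul (hr t' ht') (D.Lam.pow_mem (hH ha) _) (hH hc), ht_pow (hr t' ht') (hH ha)]
      rcases Set.mem_insert_iff.1 ht' with rfl | ht'
      · rw [h0]; simpa using hct
      · have h1 : (D.ht t' c).natAbs ≤ N := hN ⟨t', ht', rfl⟩
        have h2 := hat t' ht'
        intro h3
        have h4 : D.ht t' c = - (((N + 1 : ℕ) : ℤ) * D.ht t' a) := by omega
        rw [h4, Int.natAbs_neg, Int.natAbs_mul, Int.natAbs_natCast] at h1
        have : 1 ≤ (D.ht t' a).natAbs := by omega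
        nlinarith
    · refine ⟨a, ha, ?_⟩
      intro t' ht'
      rcases Set.mem_insert_iff.1 ht' with rfl | ht'
      · exact h0
      · exact hat t' ht'

theorem ht_prop {t t' : W} (ht : cs.IsReflection t) (ht' : cs.IsReflection t')
    (hk : ∀ a ∈ D.Lam, D.ht t a = 0 → D.ht t' a = 0) {a b : W} (ha : a ∈ D.Lam) (hb : b ∈ D.Lam) :
    D.ht t a * D.ht t' b = D.ht t b * D.ht t' a := by
  have hza := D.Lam.zpow_mem ha (D.ht t b)
  have hzb := D.Lam.zpow_mem hb (- D.ht t a)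
  have h1 := hk _ (D.Lam.mul_mem hza hzb) (by
    rw [ht_mul ht hza hzb, ht_zpow ht ha, ht_zpow ht hb]; ring)
  rw [ht_mul ht' hza hzb, ht_zpow ht' ha, ht_zpow ht' hb] at h1
  linarith

theorem ker_of_mem {t t' : W} (ht : cs.IsReflection t) (ht' : cs.IsReflection t')
    (h : t * t' ∈ D.Lam) : ∀ a ∈ D.Lam, D.ht t a = 0 → D.ht t' a = 0 := by
  intro a ha h0
  rw [ht_zero_iff ht ha] at h0
  rw [ht_zero_iff ht' ha]
  have h1 : Commute a (t * t') := D.lam_commute ha h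
  have h2 : Commute a t := h0
  have := (h2.inv_right).mul_right h1
  rw [inv_mul_cancel_left] at this
  exact this.eq

theorem exists_ht_ne {t : W} (ht : cs.IsReflection t) : ∃ a ∈ D.Lam, D.ht t a ≠ 0 := by
  obtain ⟨a, ha, h⟩ := D.exists_not_comm ht
  exact ⟨a, ha, fun h0 => h ((ht_zero_iff ht ha).1 h0)⟩

theorem ht_self_conj {t a : W} (ht : cs.IsReflection t) (ha : a ∈ D.Lam) :
    D.ht t (a * (t * a * t⁻¹)) = 0 := by
  rw [ht_zero_iff ht (D.Lam.mul_mem ha (D.lam_conj ha t))]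
  have h1 := (D.lam_commute ha (D.lam_conj ha t)).eq
  nth_rewrite 1 [h1]
  rw [ht.inv]
  simp only [mul_assoc]

theorem mem_of_ker {t t' : W} (ht : cs.IsReflection t) (ht' : cs.IsReflection t')
    (hk : ∀ a ∈ D.Lam, D.ht t a = 0 → D.ht t' a = 0) : t * t' ∈ D.Lam := by
  obtain ⟨c, hc, hc0⟩ := exists_ht_ne (D := D) ht'
  have hk' : ∀ a ∈ D.Lam, D.ht t' a = 0 → D.ht t a = 0 := by
    intro a ha h0
    have := ht_prop ht ht' hk ha hc
    rw [h0, mul_zero] at this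
    exact (mul_eq_zero.1 this).resolve_right hc0
  set x := t * t' with hx
  have := D.hLam_index
  obtain ⟨k, hk0, -, hkx⟩ := Subgroup.exists_pow_mem_of_index_ne_zero (H := D.Lam)
    (Subgroup.FiniteIndex.index_ne_zero) x
  apply D.mem_lam_of_comm
  intro a ha
  have La := D.lam_conj ha x
  have Ld : (x * a * x⁻¹) * a⁻¹ ∈ D.Lam := D.Lam.mul_mem La (D.Lam.inv_mem ha)
  have L1 := D.lam_conj ha t'
  have n1 : D.ht t (t' * a * t'⁻¹) = - D.ht t a := by
    have := hk' _ (D.Lam.mul_mem ha L1) (ht_self_conj ht' ha)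
    rw [ht_mul ht ha L1] at this
    omega
  have exx : t * (t' * a * t'⁻¹) * t⁻¹ = x * a * x⁻¹ := by rw [hx]; group
  have n2 : D.ht t (x * a * x⁻¹) = D.ht t a := by
    have := ht_self_conj ht L1
    rw [exx, ht_mul ht L1 La, n1] at this
    omega
  have n3 : D.ht t (x * a * x⁻¹ * a⁻¹) = 0 := by
    rw [ht_mul ht La (D.Lam.inv_mem ha), n2, ht_inv ht ha]; omega
  set d := x * a * x⁻¹ * a⁻¹ with hd
  have c1 : Commute d t := (ht_zero_iff ht Ld).1 n3
  have c2 : Commute d t' := (ht_zero_iff ht' Ld).1 (hk _ Ld n3)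
  have c3 : Commute d x := c1.mul_right c2
  have hpow : ∀ j : ℕ, x ^ j * a * (x ^ j)⁻¹ = d ^ j * a := by
    intro j
    induction j with
    | zero => simp
    | succ j ih =>
      have e0 : x * a * x⁻¹ = d * a := by rw [hd]; group
      calc x ^ (j + 1) * a * (x ^ (j + 1))⁻¹ = x * (x ^ j * a * (x ^ j)⁻¹) * x⁻¹ := by
            rw [pow_succ']; group
        _ = (x * d ^ j) * a * x⁻¹ := by rw [ih]; group
        _ = d ^ j * (x * a * x⁻¹) := by rw [← (c3.pow_left j).eq]; group
        _ = d ^ (j + 1) * a := by rw [e0, pow_succ]; group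
  have hdk : d ^ k = 1 := by
    have h1 := hpow k
    rw [← (D.lam_commute ha hkx).eq, mul_inv_cancel_right] at h1
    exact (right_eq_mul.1 h1)
  have hd1 : d = 1 := D.lam_pow_inj Ld D.Lam.one_mem (k := k) (by omega) (by rw [hdk, one_pow])
  have h5 := hpow 1
  rw [hd1] at h5
  simp only [pow_one, one_mul] at h5
  rw [mul_inv_eq_iff_eq_mul] at h5
  exact h5.symm

theorem exists_refl_rep {I : Set W} (hI : I ⊆ Set.range cs.simple)
    (hfin : (Subgroup.closure I : Set W).Finite) {s u : W} (hs : cs.IsReflection s)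
    (hu : u ∈ Subgroup.closure I) (hsu : s * u⁻¹ ∈ D.Lam) :
    ∃ t ∈ Subgroup.closure I, cs.IsReflection t ∧ s * t ∈ D.Lam := by
  by_contra! hcon
  obtain ⟨a, ha, har⟩ := exists_regular (D := D) (D.Lam ⊓ Subgroup.centralizer {s}) inf_le_left
    (T := {t | t ∈ Subgroup.closure I ∧ cs.IsReflection t}) (hfin.subset fun t h => h.1)
    (fun t h => h.2) (by
      intro t ht
      by_contra! h
      refine hcon t ht.1 ht.2 (mem_of_ker hs ht.2 fun a ha h0 => h a (Subgroup.mem_inf.2 ⟨ha, ?_⟩))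
      rw [ht_zero_iff hs ha] at h0
      rw [Subgroup.mem_centralizer_singleton_iff]
      exact h0)
  obtain ⟨ha, has⟩ := Subgroup.mem_inf.1 ha
  rw [Subgroup.mem_centralizer_singleton_iff] at has
  have hau : Commute a u := by
    have h1 : Commute a (s * u⁻¹) := D.lam_commute ha hsu
    have h2 : Commute a s := has
    have h3 := (h2.inv_right.mul_right h1).inv_right
    simpa using h3
  have hu1 : u ≠ 1 := by
    rintro rfl
    rw [inv_one, mul_one] at hsu
    exact D.refl_notMem hs hsu
  obtain ⟨t, ht, htr, h0⟩ := exists_refl_fixed hI hfin ha hu hu1 hau.eq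
  exact har t ⟨ht, htr⟩ h0

end Signs

end AffineData



/-! ## The key relation between two hyperspecial vertices -/

namespace AffineData

section Star

variable {cs : CoxeterSystem M W} {D : AffineData cs}

theorem list_prod_mem_lam {l : List W} (hl : ∀ x ∈ l, x ∈ D.Lam) : l.prod ∈ D.Lam :=
  Subgroup.list_prod_mem _ hl

theorem ht_list_nonneg {t : W} (ht : cs.IsReflection t) {l : List W} (hl : ∀ x ∈ l, x ∈ D.Lam)
    (h : ∀ x ∈ l, 0 ≤ D.ht t x) : 0 ≤ D.ht t l.prod := by
  induction l with
  | nil => simp [ht_one ht]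
  | cons a l ih =>
    have h1 : ∀ x ∈ l, x ∈ D.Lam := fun x hx => hl x (List.mem_cons_of_mem _ hx)
    rw [List.prod_cons, ht_mul ht (hl a List.mem_cons_self) (list_prod_mem_lam h1)]
    have := ih h1 fun x hx => h x (List.mem_cons_of_mem _ hx)
    have := h a List.mem_cons_self
    omega

theorem ht_list_pos {t : W} (ht : cs.IsReflection t) {l : List W} (hl : ∀ x ∈ l, x ∈ D.Lam)
    (h : ∀ x ∈ l, 0 < D.ht t x) (hne : l ≠ []) : 0 < D.ht t l.prod := by
  cases l with
  | nil => exact absurd rfl hne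
  | cons a l =>
    have h1 : ∀ x ∈ l, x ∈ D.Lam := fun x hx => hl x (List.mem_cons_of_mem _ hx)
    rw [List.prod_cons, ht_mul ht (hl a List.mem_cons_self) (list_prod_mem_lam h1)]
    have := ht_list_nonneg ht h1 fun x hx => (h x (List.mem_cons_of_mem _ hx)).le
    have := h a List.mem_cons_self
    omega

/-- Averaging over a finite subgroup. -/
theorem exists_average (H : Subgroup W) (hfin : (H : Set W).Finite) {σ : W} (hσ : σ ∈ D.Lam) :
    ∃ τ ∈ D.Lam, (∀ k ∈ H, k * τ * k⁻¹ = τ) ∧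
      ∀ t, cs.IsReflection t → (∀ u ∈ H, 0 < D.ht t (u * σ * u⁻¹)) → 0 < D.ht t τ := by
  let l : List W := hfin.toFinset.toList
  have hmem : ∀ x, x ∈ l ↔ x ∈ H := fun x => by simp [l]
  have hnd : l.Nodup := Finset.nodup_toList _
  let f : W → W := fun u => u * σ * u⁻¹
  have hlam : ∀ x ∈ l.map f, x ∈ D.Lam := by
    intro x hx
    obtain ⟨u, _, rfl⟩ := List.mem_map.1 hx
    exact D.lam_conj hσ u
  refine ⟨(l.map f).prod, list_prod_mem_lam hlam, ?_, ?_⟩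
  · intro k hk
    have e1 : k * (l.map f).prod * k⁻¹ = ((l.map (fun u => k * u)).map f).prod := by
      have := map_list_prod (MulAut.conj k) (l.map f)
      rw [MulAut.conj_apply] at this
      rw [this, List.map_map, List.map_map]
      congr 1
      apply List.map_congr_left
      intro u _
      simp only [Function.comp, MulAut.conj_apply, f]
      group
    have hp : (l.map (fun u => k * u)).Perm l := by
      rw [List.perm_ext_iff_of_nodup (hnd.map (mul_right_injective k)) hnd]
      intro x
      rw [List.mem_map, hmem]
      constructor
      · rintro ⟨u, hu, rfl⟩
        exact H.mul_mem hk ((hmem u).1 hu)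
      · intro hx
        exact ⟨k⁻¹ * x, (hmem _).2 (H.mul_mem (H.inv_mem hk) hx), by group⟩
    rw [e1]
    refine ((hp.map f).symm.prod_eq' ?_).symm
    refine List.Pairwise.imp_of_mem (R := fun _ _ => True) ?_ (List.pairwise_of_forall (fun _ _ => trivial))
    intro a b ha hb _
    exact D.lam_commute (hlam a ha) (hlam b hb)
  · intro t ht h
    refine ht_list_pos ht hlam ?_ ?_
    · intro x hx
      obtain ⟨u, hu, rfl⟩ := List.mem_map.1 hx
      exact h u ((hmem u).1 hu)
    · intro h0
      have : (1 : W) ∈ l := (hmem 1).2 H.one_mem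
      rw [List.map_eq_nil_iff] at h0
      rw [h0] at this
      exact List.not_mem_nil this

theorem finite_of_hyper {H : Subgroup W}
    (h : ∀ w : W, ∃! u : W, u ∈ H ∧ w * u⁻¹ ∈ D.Lam) : (H : Set W).Finite := by
  have := D.hLam_index
  refine Set.Finite.of_finite_image (f := fun u : W => (u : W ⧸ D.Lam)) (Set.toFinite _) ?_
  intro u hu v hv e
  have e1 : u⁻¹ * v ∈ D.Lam := QuotientGroup.eq.1 e
  have e2 : u * v⁻¹ ∈ D.Lam := by
    have := D.lam_conj (D.Lam.inv_mem e1) u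
    rw [show u * (u⁻¹ * v)⁻¹ * u⁻¹ = u * v⁻¹ by group] at this
    exact this
  exact (h u).unique ⟨hu, by simp [D.Lam.one_mem]⟩ ⟨hv, e2⟩

theorem star_rel {s1 w : W} (hs1_S : s1 ∈ Set.range cs.simple)
    (hs1_hyper : ∀ w : W, ∃! u : W,
      u ∈ Subgroup.closure (Set.range cs.simple \ {s1}) ∧ w * u⁻¹ ∈ D.Lam)
    (hne : D.s0 ≠ s1)
    (hw : w ∈ Subgroup.closure (Set.range cs.simple \ {D.s0, s1}))
    (hwN : ∀ t ∈ Subgroup.closure (Set.range cs.simple \ {D.s0, s1}), cs.IsReflection t →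
      nn cs w t = 1) (hww : w * w = 1)
    (hwk : ∀ k ∈ Set.range cs.simple \ {D.s0, s1}, w * k * w⁻¹ ∈ Set.range cs.simple \ {D.s0, s1}) :
    D.s0 * (w * s1 * w) ∈ D.Lam := by
  set S := Set.range cs.simple with hS
  set K := S \ {D.s0, s1} with hK
  set J := S \ {D.s0} with hJ
  set J1 := S \ {s1} with hJ1
  have hwi : w⁻¹ = w := by rw [inv_eq_iff_mul_eq_one]; exact hww
  have hKS : K ⊆ S := Set.sdiff_subset
  have hJS : J ⊆ S := Set.sdiff_subset
  have hJ1S : J1 ⊆ S := Set.sdiff_subset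
  have hKJ : K ⊆ J := Set.sdiff_subset_sdiff_right (by simp)
  have hKJ1 : K ⊆ J1 := Set.sdiff_subset_sdiff_right (by simp)
  have cKJ : Subgroup.closure K ≤ Subgroup.closure J := Subgroup.closure_mono hKJ
  have cKJ1 : Subgroup.closure K ≤ Subgroup.closure J1 := Subgroup.closure_mono hKJ1
  have hfJ : (Subgroup.closure J : Set W).Finite := D.hWJ_fin
  have hfK : (Subgroup.closure K : Set W).Finite := hfJ.subset cKJ
  have hfJ1 : (Subgroup.closure J1 : Set W).Finite := finite_of_hyper hs1_hyper
  have rs : ∀ s ∈ S, cs.IsReflection s := fun s hs => isRefl_of_mem subset_rfl hs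
  have rs0 := rs _ D.hs0_S
  have rs1 := rs _ hs1_S
  have hs1J : s1 ∈ J := ⟨hs1_S, fun h => hne h.symm⟩
  have hs1cJ : s1 ∈ Subgroup.closure J := Subgroup.subset_closure hs1J
  have hs1K : s1 ∉ Subgroup.closure K := fun h =>
    (simple_mem_closure cs hKS hs1_S h).2 (by simp)
  have hs0K : D.s0 ∉ Subgroup.closure K := fun h =>
    (simple_mem_closure cs hKS D.hs0_S h).2 (by simp)
  set z := w * D.s0 * w⁻¹ with hz
  have rz : cs.IsReflection z := rs0.conj w
  have hzK : z ∉ Subgroup.closure K := by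
    intro h
    apply hs0K
    have : D.s0 = w⁻¹ * z * w := by rw [hz]; group
    rw [this]
    exact Subgroup.mul_mem _ (Subgroup.mul_mem _ (Subgroup.inv_mem _ hw) h) hw
  have nwz : nn cs w z = 0 := by
    by_contra h
    exact hzK (mem_of_nn cs hKS hw h)
  obtain ⟨u0, ⟨hu0, hu0'⟩, -⟩ := D.hs0_hyper z
  obtain ⟨t, htJ, rt, hzt⟩ := exists_refl_rep (D := D) hJS hfJ rz hu0 hu0'
  obtain ⟨u1, ⟨hu1, hu1'⟩, -⟩ := hs1_hyper s1
  obtain ⟨t1, ht1J, rt1, hst1⟩ := exists_refl_rep (D := D) hJ1S hfJ1 rs1 hu1 hu1'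
  by_cases hts : t = s1
  · rw [hts] at hzt
    have := D.lam_conj' hzt w
    rw [show w⁻¹ * (z * s1) * w = D.s0 * (w⁻¹ * s1 * w) by rw [hz]; group, hwi] at this
    exact this
  exfalso
  have hzt' : t * z ∈ D.Lam := by
    have := D.Lam.inv_mem hzt
    rwa [mul_inv_rev, rt.inv, rz.inv] at this
  have hst1' : t1 * s1 ∈ D.Lam := by
    have := D.Lam.inv_mem hst1
    rwa [mul_inv_rev, rt1.inv, rs1.inv] at this
  -- a regular dominant translation
  obtain ⟨σ, Lσ, hσ⟩ : ∃ σ ∈ D.Lam, ∀ t' ∈ Subgroup.closure J, cs.IsReflection t' →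
      0 < D.ht t' σ := by
    obtain ⟨a, ha, har⟩ := exists_regular (D := D) D.Lam le_rfl
      (T := {t | t ∈ Subgroup.closure J ∧ cs.IsReflection t}) (hfJ.subset fun t h => h.1)
      (fun t h => h.2) (fun t h => exists_ht_ne h.2)
    obtain ⟨v, hv, hdom⟩ := exists_dom_conj hJS hfJ ha
    have Lb := D.lam_conj' ha v
    refine ⟨v⁻¹ * a * v, Lb, fun t' ht' rt' => ?_⟩
    have h1 := dom_closure hJS Lb hdom rt' ht'
    have h2 : D.ht t' (v⁻¹ * a * v) ≠ 0 := by
      intro h0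
      rw [← ht_conj_zero v rt' Lb, show v * (v⁻¹ * a * v) * v⁻¹ = a by group] at h0
      exact har _ ⟨Subgroup.mul_mem _ (Subgroup.mul_mem _ hv ht') (Subgroup.inv_mem _ hv),
        rt'.conj v⟩ h0
    omega
  -- averaging
  obtain ⟨τ, Lτ, hτfix, hτpos⟩ := exists_average (D := D) (Subgroup.closure K) hfK Lσ
  have τs1 : 0 < D.ht s1 τ := by
    apply hτpos s1 rs1
    intro u hu
    have huJ := cKJ hu
    have rr : cs.IsReflection (u⁻¹ * s1 * u) := by
      have := rs1.conj u⁻¹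
      rwa [inv_inv] at this
    have hr := hσ (u⁻¹ * s1 * u) (Subgroup.mul_mem _ (Subgroup.mul_mem _
      (Subgroup.inv_mem _ huJ) hs1cJ) huJ) rr
    have e : u * (u⁻¹ * s1 * u) * u⁻¹ = s1 := by group
    have n0 : nn cs u s1 = 0 := by
      by_contra h
      exact hs1K (mem_of_nn cs hKS hu h)
    have hc := ht_conj0 (D := D) u rr Lσ (by rw [e]; exact n0)
    rw [e] at hc
    exact hc.1.1 hr
  have τk : ∀ k ∈ K, D.ht k τ = 0 := by
    intro k hk
    rw [ht_zero_iff (rs k (hKS hk)) Lτ]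
    have := hτfix k (Subgroup.subset_closure hk)
    nth_rewrite 1 [← this]
    group
  have τs0 : D.ht D.s0 τ < 0 := by
    have h1 : τ ≠ 1 := by
      rintro rfl
      rw [ht_one rs1] at τs1
      omega
    obtain ⟨s, hs, hneg⟩ := exists_neg Lτ h1
    by_cases e0 : s = D.s0
    · rwa [← e0]
    by_cases e1 : s = s1
    · rw [e1] at hneg; omega
    have := τk s ⟨hs, by simp [e0, e1]⟩
    omega
  have τz : D.ht z τ < 0 := by
    have hc := ht_conj0 (D := D) w rs0 Lτ nwz
    rw [hτfix w hw] at hc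
    exact hc.2.1 τs0
  have τt : 0 < D.ht t τ := by
    have h1 : 0 ≤ D.ht t τ := by
      refine dom_closure hJS Lτ ?_ rt htJ
      intro s hs
      by_cases e1 : s = s1
      · rw [e1]; omega
      · have := τk s ⟨hs.1, by
          rintro (h | h)
          · exact hs.2 h
          · exact e1 h⟩
        omega
    have h2 : D.ht t τ ≠ 0 := fun h => by
      have := ker_of_mem rt rz hzt' τ Lτ h
      omega
    omega
  have zt : ∀ a ∈ D.Lam, 0 ≤ D.ht t a → D.ht z a ≤ 0 := by
    intro a ha h0
    have hp := ht_prop rz rt (ker_of_mem rz rt hzt) ha Lτ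
    by_contra hcon
    nlinarith
  -- the reflected translation
  have Lρ := D.lam_conj Lσ s1
  set ρ := s1 * σ * s1⁻¹ with hρ
  have hnns1 : ∀ x, nn cs s1 x = if x = s1 then 1 else 0 := by
    obtain ⟨i, rfl⟩ := hs1_S
    exact nn_simple cs i
  have ρpos : ∀ t' ∈ Subgroup.closure J, cs.IsReflection t' → t' ≠ s1 → 0 < D.ht t' ρ := by
    intro t' ht' rt' hne'
    have rr : cs.IsReflection (s1⁻¹ * t' * s1) := by
      have := rt'.conj s1⁻¹
      rwa [inv_inv] at this
    have hr := hσ (s1⁻¹ * t' * s1) (Subgroup.mul_mem _ (Subgroup.mul_mem _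
      (Subgroup.inv_mem _ hs1cJ) ht') hs1cJ) rr
    have e : s1 * (s1⁻¹ * t' * s1) * s1⁻¹ = t' := by group
    have hc := ht_conj0 (D := D) s1 rr Lσ (by rw [e, hnns1, if_neg hne'])
    rw [e] at hc
    exact hc.1.1 hr
  have σs1 := hσ s1 hs1cJ rs1
  have ρs1 : D.ht s1 ρ < 0 := by
    have e : s1 * s1 * s1⁻¹ = s1 := by group
    have hc := ht_conj1 (D := D) s1 rs1 Lσ (by rw [e, hnns1, if_pos rfl])
    rw [e] at hc
    exact hc.1.1 σs1
  -- comparison of signs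
  have comp : ∀ a ∈ D.Lam, (∀ k ∈ K, 0 ≤ D.ht k a) → 0 ≤ D.ht t a →
      (nn cs w t1 = 0 → D.ht t1 a ≤ 0) ∧ (nn cs w t1 = 1 → 0 ≤ D.ht t1 a) := by
    intro a ha hak hat
    have Lai := D.Lam.inv_mem ha
    have Lb := D.lam_conj' Lai w
    have eb : w * (w⁻¹ * a⁻¹ * w) * w⁻¹ = a⁻¹ := by group
    have hb : ∀ s ∈ J1, 0 ≤ D.ht s (w⁻¹ * a⁻¹ * w) := by
      intro s hs
      by_cases e0 : s = D.s0
      · rw [e0]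
        have hc := ht_conj0 (D := D) w rs0 Lb nwz
        rw [eb, ← hz, ht_inv rz ha] at hc
        have := zt a ha hat
        omega
      · have hsK : s ∈ K := ⟨hs.1, by
          rintro (h | h)
          · exact e0 h
          · exact hs.2 h⟩
        have hk' := hwk s hsK
        have rk' := rs _ (hKS hk')
        have hc := ht_conj1 (D := D) w (rs s hs.1) Lb
          (hwN _ (Subgroup.subset_closure hk') rk')
        rw [eb, ht_inv rk' ha] at hc
        have := hak _ hk'
        omega
    have rr : cs.IsReflection (w⁻¹ * t1 * w) := by
      have := rt1.conj w⁻¹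
      rwa [inv_inv] at this
    have hwJ1 := cKJ1 hw
    have hd := dom_closure hJ1S Lb hb rr (Subgroup.mul_mem _ (Subgroup.mul_mem _
      (Subgroup.inv_mem _ hwJ1) ht1J) hwJ1)
    have e : w * (w⁻¹ * t1 * w) * w⁻¹ = t1 := by group
    constructor
    · intro h
      have hc := ht_conj0 (D := D) w rr Lb (by rw [e]; exact h)
      rw [eb, e, ht_inv rt1 ha] at hc
      omega
    · intro h
      have hc := ht_conj1 (D := D) w rr Lb (by rw [e]; exact h)
      rw [eb, e, ht_inv rt1 ha] at hc
      omega
  have c1 := comp σ Lσ (fun k hk => (hσ k (cKJ (Subgroup.subset_closure hk)) (rs k (hKS hk))).le)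
    (hσ t htJ rt).le
  have c2 := comp ρ Lρ (fun k hk => (ρpos k (cKJ (Subgroup.subset_closure hk)) (rs k (hKS hk))
    (fun h => hk.2 (by simp [h]))).le) (ρpos t htJ rt hts).le
  have hp := ht_prop rs1 rt1 (ker_of_mem rs1 rt1 hst1) Lσ Lρ
  have hnz : D.ht t1 σ ≠ 0 := fun h => by
    have := ker_of_mem rt1 rs1 hst1' σ Lσ h
    omega
  rcases zmod2_cases (nn cs w t1) with h | h
  · have a1 := c1.1 h
    have a2 := c2.1 h
    have a3 : D.ht t1 σ < 0 := by omega
    nlinarith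
  · have a1 := c1.2 h
    have a2 := c2.2 h
    have a3 : 0 < D.ht t1 σ := by omega
    nlinarith

end Star

end AffineData



/-! ## Diagram automorphisms -/

namespace AffineData

section Final

variable {cs : CoxeterSystem M W} {D : AffineData cs}

theorem eq_one_of_mem {H : Subgroup W} (h : ∀ w : W, ∃! u : W, u ∈ H ∧ w * u⁻¹ ∈ D.Lam)
    {x : W} (hx : x ∈ H) (hL : x ∈ D.Lam) : x = 1 :=
  (h x).unique ⟨hx, by simp [D.Lam.one_mem]⟩ ⟨H.one_mem, by simpa using hL⟩

theorem eq_one_of_conj_simple {w : W}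
    (h : ∀ s ∈ Set.range cs.simple, w * s * w⁻¹ ∈ Set.range cs.simple)
    (h' : ∀ s ∈ Set.range cs.simple, w⁻¹ * s * w ∈ Set.range cs.simple) (D : AffineData cs) :
    w = 1 := by
  have h1 : ∀ (i : B) (t : W), nn cs w (cs.simple i * t * cs.simple i) = nn cs w t := by
    intro i t
    obtain ⟨k, hk⟩ := h' _ ⟨i, rfl⟩
    have e : w * cs.simple k = cs.simple i * w := by rw [hk]; group
    have e1 := nn_mul cs w (cs.simple k) t
    rw [e, nn_mul, nn_simple, nn_simple, hk, cs.inv_simple] at e1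
    have e2 : (w⁻¹ * t * w = w⁻¹ * cs.simple i * w) ↔ t = cs.simple i := by
      rw [mul_left_inj, mul_right_inj]
    simp only [e2] at e1
    rw [add_comm] at e1
    exact add_right_cancel e1
  have h2 : ∀ g t : W, nn cs w (g * t * g⁻¹) = nn cs w t := by
    intro g
    induction g using cs.simple_induction_left with
    | one => simp
    | mul_simple_left g i ih =>
      intro t
      rw [mul_inv_rev, cs.inv_simple, ← ih t, ← h1 i (g * t * g⁻¹)]
      simp only [mul_assoc]
  apply eq_one_of_nn cs
  intro t
  by_contra hn
  refine D.refl_notMem (nn_isReflection cs hn) ((D.hLam_mem t).2 ?_)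
  refine (nn_finite cs w).subset ?_
  intro y hy
  obtain ⟨c, rfl⟩ := isConj_iff.1 hy
  show nn cs w _ ≠ 0
  rw [h2]
  exact hn

theorem auto_eq_one {b : MulAut W} (hS : IsDiagAut cs b) (h0 : b D.s0 = D.s0) {w : W}
    (hw : w ∈ D.WJ) (hL : ∀ l ∈ D.Lam, b l = w * l * w⁻¹) : b = 1 := by
  have hbS : ∀ s ∈ Set.range cs.simple, b s ∈ Set.range cs.simple := by
    intro s hs
    rw [← hS]
    exact ⟨s, hs, rfl⟩
  have hbJ : ∀ u ∈ D.WJ, b u ∈ D.WJ := by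
    intro u hu
    have : D.WJ ≤ D.WJ.comap (b : W →* W) := by
      refine (Subgroup.closure_le _).2 ?_
      intro s hs
      refine Subgroup.subset_closure ⟨hbS s hs.1, ?_⟩
      intro e
      exact hs.2 (b.injective (by rw [h0]; exact e))
    exact this hu
  have hu : ∀ u ∈ D.WJ, b u = w * u * w⁻¹ := by
    intro u hu
    have hx : (b u)⁻¹ * (w * u * w⁻¹) ∈ D.WJ :=
      D.WJ.mul_mem (D.WJ.inv_mem (hbJ u hu)) (D.WJ.mul_mem (D.WJ.mul_mem hw hu) (D.WJ.inv_mem hw))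
    have hxL : (b u)⁻¹ * (w * u * w⁻¹) ∈ D.Lam := by
      apply D.mem_lam_of_comm
      intro l hl
      have hl' := D.lam_conj' hl w
      have e1 := hL _ (D.lam_conj hl' u)
      rw [map_mul, map_mul, map_inv, hL _ hl',
        show w * (w⁻¹ * l * w) * w⁻¹ = l by group] at e1
      calc l * ((b u)⁻¹ * (w * u * w⁻¹))
          = (b u)⁻¹ * (b u * l * (b u)⁻¹) * (w * u * w⁻¹) := by group
        _ = (b u)⁻¹ * (w * u * w⁻¹) * l := by rw [e1]; group
    have := eq_one_of_mem D.hs0_hyper hx hxL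
    exact (inv_mul_eq_one.1 this)
  have hall : ∀ g, b g = w * g * w⁻¹ := by
    intro g
    obtain ⟨u, ⟨hu1, hu2⟩, -⟩ := D.hs0_hyper g
    have : g = (g * u⁻¹) * u := by group
    rw [this, map_mul, hL _ hu2, hu u hu1]
    group
  have hw1 : w = 1 := by
    apply eq_one_of_conj_simple (cs := cs) _ _ D
    · intro s hs
      rw [← hall]
      exact hbS s hs
    · intro s hs
      rw [← hS] at hs
      obtain ⟨s', hs', rfl⟩ := hs
      rw [hall, show w⁻¹ * (w * s' * w⁻¹) * w = s' by group]
      exact hs'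
  ext g
  rw [hall, hw1]
  simp

theorem exists_proj {H : Subgroup W} (h : ∀ w : W, ∃! u : W, u ∈ H ∧ w * u⁻¹ ∈ D.Lam) :
    ∃ p : W →* W, (∀ w, p w ∈ H) ∧ (∀ w, w * (p w)⁻¹ ∈ D.Lam) ∧
      ∀ w u, u ∈ H → w * u⁻¹ ∈ D.Lam → p w = u := by
  choose p hp hp2 using fun w => (h w).exists
  have huniq : ∀ w u, u ∈ H → w * u⁻¹ ∈ D.Lam → p w = u := fun w u hu hL =>
    (h w).unique ⟨hp w, hp2 w⟩ ⟨hu, hL⟩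
  refine ⟨MonoidHom.mk' p ?_, hp, hp2, huniq⟩
  intro x y
  apply huniq _ _ (H.mul_mem (hp x) (hp y))
  have := D.Lam.mul_mem (D.lam_conj (hp2 y) x) (hp2 x)
  rw [show x * (y * (p y)⁻¹) * x⁻¹ * (x * (p x)⁻¹) = x * y * (p x * p y)⁻¹ by group] at this
  exact this

theorem twist_comm {p q : W →* W} (hp : ∀ w, w * (p w)⁻¹ ∈ D.Lam)
    (hq : ∀ w, w * (q w)⁻¹ ∈ D.Lam) (x y : W) :
    (x * y) * (q (x * y))⁻¹ * p (x * y) = (x * (q x)⁻¹ * p x) * (y * (q y)⁻¹ * p y) := by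
  have h1 : (q x)⁻¹ * p x ∈ D.Lam := by
    have a1 := D.lam_conj' (hq x) (q x)
    have a2 := D.lam_conj' (D.Lam.inv_mem (hp x)) (x)
    have := D.Lam.mul_mem a1 a2
    rw [show (q x)⁻¹ * (x * (q x)⁻¹) * q x * (x⁻¹ * (x * (p x)⁻¹)⁻¹ * x) =
      (q x)⁻¹ * p x by group] at this
    exact this
  have h2 := (D.lam_commute (hq y) h1).eq
  rw [map_mul, map_mul]
  calc x * y * (q x * q y)⁻¹ * (p x * p y)
      = x * (y * (q y)⁻¹ * ((q x)⁻¹ * p x)) * p y := by group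
    _ = _ := by rw [h2]; group

/-- The automorphism of `W` that is the identity on `Λ` and identifies two complements. -/
theorem exists_twist {p q : W →* W} (hp : ∀ w, w * (p w)⁻¹ ∈ D.Lam)
    (hq : ∀ w, w * (q w)⁻¹ ∈ D.Lam) (hpL : ∀ l ∈ D.Lam, p l = 1) (hqL : ∀ l ∈ D.Lam, q l = 1) :
    ∃ h : MulAut W, ∀ x, h x = x * (q x)⁻¹ * p x := by
  have e : ∀ {p q : W →* W}, (∀ w, w * (p w)⁻¹ ∈ D.Lam) → (∀ w, w * (q w)⁻¹ ∈ D.Lam) →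
      (∀ l ∈ D.Lam, p l = 1) → (∀ l ∈ D.Lam, q l = 1) → ∀ x,
      (x * (q x)⁻¹ * p x) * (p (x * (q x)⁻¹ * p x))⁻¹ * q (x * (q x)⁻¹ * p x) = x := by
    intro p q hp hq hpL hqL x
    have ep : p (x * (p x)⁻¹) = 1 := hpL _ (hp x)
    have eq' : q (x * (p x)⁻¹) = 1 := hqL _ (hp x)
    rw [map_mul, map_inv, mul_inv_eq_one] at ep eq'
    rw [map_mul p, map_mul q, hpL _ (hq x), hqL _ (hq x), ← ep, ← eq']
    group
  refine ⟨MulEquiv.mk' ⟨fun x => x * (q x)⁻¹ * p x, fun x => x * (p x)⁻¹ * q x,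
    e hp hq hpL hqL, e hq hp hqL hpL⟩ (twist_comm hp hq), fun x => rfl⟩

theorem s0_notMem : D.s0 ∉ Subgroup.closure (Set.range cs.simple \ {D.s0}) := fun h =>
  (simple_mem_closure cs Set.sdiff_subset D.hs0_S h).2 rfl

theorem st_s0 : D.st D.s0 = D.s0 := by
  by_contra hne
  have h1 : D.st D.s0 ∈ Subgroup.closure (Set.range cs.simple \ {D.s0}) :=
    Subgroup.subset_closure ⟨D.hst_S _ D.hs0_S, hne⟩
  have h2 := D.hst_J _ h1
  rw [D.hst_inv] at h2
  have h3 : D.wJ * D.st D.s0 * D.wJ ∈ Subgroup.closure (Set.range cs.simple \ {D.s0}) :=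
    Subgroup.mul_mem _ (Subgroup.mul_mem _ D.hwJ_mem h1) D.hwJ_mem
  rw [← h2] at h3
  exact s0_notMem h3

theorem wJ_sq : D.wJ * D.wJ = 1 := by
  have := D.hst_J 1 (Subgroup.one_mem _)
  rw [map_one, mul_one] at this
  exact this.symm

theorem exists_a {s1 : W} (hs1_S : s1 ∈ Set.range cs.simple)
    (hs1_hyper : ∀ w : W, ∃! u : W,
      u ∈ Subgroup.closure (Set.range cs.simple \ {s1}) ∧ w * u⁻¹ ∈ D.Lam) :
    ∃ a : MulAut W, D.InALam a ∧ a D.s0 = s1 := by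
  by_cases hne : D.s0 = s1
  · refine ⟨1, ⟨?_, 1, Subgroup.one_mem _, ?_⟩, by simpa using hne⟩
    · simp [IsDiagAut]
    · intro l _; simp
  have hfK : (Subgroup.closure (Set.range cs.simple \ {D.s0, s1}) : Set W).Finite :=
    D.hWJ_fin.subset (Subgroup.closure_mono (Set.sdiff_subset_sdiff_right (by simp)))
  obtain ⟨w, hw, hwN, hww, hwk⟩ := exists_longest cs Set.sdiff_subset hfK
  have hstar := star_rel hs1_S hs1_hyper hne hw hwN hww hwk
  have cKJ : Subgroup.closure (Set.range cs.simple \ {D.s0, s1}) ≤ D.WJ :=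
    Subgroup.closure_mono (Set.sdiff_subset_sdiff_right (by simp))
  have cKJ1 : Subgroup.closure (Set.range cs.simple \ {D.s0, s1}) ≤
      Subgroup.closure (Set.range cs.simple \ {s1}) :=
    Subgroup.closure_mono (Set.sdiff_subset_sdiff_right (by simp))
  have rs : ∀ s ∈ Set.range cs.simple, cs.IsReflection s :=
    fun s hs => isRefl_of_mem subset_rfl hs
  have rs0 := rs _ D.hs0_S
  have rs1 := rs _ hs1_S
  have hwi : w⁻¹ = w := by rw [inv_eq_iff_mul_eq_one]; exact hww
  have hJi : D.wJ⁻¹ = D.wJ := by rw [inv_eq_iff_mul_eq_one]; exact wJ_sq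
  obtain ⟨p, hpm, hpL, hpu⟩ := exists_proj (D := D) (H := D.WJ) D.hs0_hyper
  obtain ⟨q, hqm, hqL, hqu⟩ := exists_proj (D := D) hs1_hyper
  have hp1 : ∀ l ∈ D.Lam, p l = 1 := fun l hl => hpu l 1 (Subgroup.one_mem _) (by simpa using hl)
  have hq1 : ∀ l ∈ D.Lam, q l = 1 := fun l hl => hqu l 1 (Subgroup.one_mem _) (by simpa using hl)
  have hpid : ∀ u ∈ D.WJ, p u = u := fun u hu => hpu u u hu (by simp [D.Lam.one_mem])
  have hqid : ∀ u ∈ Subgroup.closure (Set.range cs.simple \ {s1}), q u = u :=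
    fun u hu => hqu u u hu (by simp [D.Lam.one_mem])
  obtain ⟨h, hh⟩ := exists_twist hpL hqL hp1 hq1
  have hs1J : s1 ∈ D.WJ := Subgroup.subset_closure ⟨hs1_S, fun e => hne e.symm⟩
  have hs0J1 : D.s0 ∈ Subgroup.closure (Set.range cs.simple \ {s1}) :=
    Subgroup.subset_closure ⟨D.hs0_S, hne⟩
  have hwJ := cKJ hw
  have hwJ1 := cKJ1 hw
  set r := w * s1 * w with hr
  have hrm : r ∈ D.WJ := D.WJ.mul_mem (D.WJ.mul_mem hwJ hs1J) hwJ
  have hri : r⁻¹ = r := by rw [hr]; simp only [mul_inv_rev, hwi, rs1.inv, mul_assoc]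
  have hps0 : p D.s0 = r := hpu _ _ hrm (by rw [hri]; exact hstar)
  have hqs1 : q s1 = w * D.s0 * w := by
    apply hqu
    · exact Subgroup.mul_mem _ (Subgroup.mul_mem _ hwJ1 hs0J1) hwJ1
    · have := D.Lam.inv_mem (D.lam_conj hstar w)
      have e : (w * (D.s0 * r) * w⁻¹)⁻¹ = s1 * (w * D.s0 * w)⁻¹ := by
        rw [hr, show w * (D.s0 * (w * s1 * w)) * w⁻¹ = w * D.s0 * w * s1 by group, mul_inv_rev,
          rs1.inv]
      rwa [e] at this
  set y := D.wJ * w with hy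
  have hym : y ∈ D.WJ := D.WJ.mul_mem D.hwJ_mem hwJ
  have hyi : y⁻¹ = w * D.wJ := by rw [hy, mul_inv_rev, hwi, hJi]
  set g : MulAut W := MulAut.conj y * h with hg
  have hgx : ∀ x, g x = y * h x * y⁻¹ := fun x => rfl
  have gL : ∀ l ∈ D.Lam, g l = y * l * y⁻¹ := by
    intro l hl
    rw [hgx, hh, hp1 l hl, hq1 l hl]
    simp
  have hstJ : ∀ s ∈ Set.range cs.simple \ {D.s0}, D.wJ * s * D.wJ ∈ Set.range cs.simple := by
    intro s hs
    rw [← D.hst_J s (Subgroup.subset_closure hs)]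
    exact D.hst_S s hs.1
  have gs0 : g D.s0 = D.wJ * s1 * D.wJ := by
    rw [hgx, hh, hps0, hqid _ hs0J1, hyi, hy, hr, mul_inv_cancel, one_mul]
    calc D.wJ * w * (w * s1 * w) * (w * D.wJ)
        = D.wJ * (w * w) * s1 * (w * w) * D.wJ := by simp only [mul_assoc]
      _ = _ := by rw [hww]; simp
  have gs1 : g s1 = D.s0 := by
    have hμ : D.s0 * r ∈ D.Lam := hstar
    set μ := D.s0 * r with hμd
    have hrr : r * r = 1 := by
      nth_rewrite 1 [← hri]; group
    have e0 : D.s0 = μ * r := by rw [hμd, mul_assoc, hrr, mul_one]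
    have e1 : D.s0 = (D.wJ * μ * D.wJ⁻¹)⁻¹ * (D.wJ * r * D.wJ) := by
      have h1 := st_s0 (D := D)
      rw [e0, map_mul, D.hst_Lam μ hμ, D.hst_J r hrm] at h1
      rw [h1]; exact e0
    have e2 : D.wJ * r * D.wJ = r := by
      have : p D.s0 = D.wJ * r * D.wJ := by
        apply hpu
        · exact D.WJ.mul_mem (D.WJ.mul_mem D.hwJ_mem hrm) D.hwJ_mem
        · rw [mul_inv_eq_of_eq_mul e1]
          exact D.Lam.inv_mem (D.lam_conj hμ _)
      rw [← this, hps0]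
    have e3 : D.wJ * μ * D.wJ⁻¹ = μ⁻¹ := by
      rw [e2] at e1
      have := mul_right_cancel (e0.symm.trans e1)
      exact inv_eq_iff_eq_inv.1 this.symm
    have e4 : h s1 = w * (r * D.s0 * r) * w := by
      rw [hh, hqs1, hpid _ hs1J, mul_inv_rev, mul_inv_rev, hwi, rs0.inv, hr]
      calc s1 * (w * (D.s0 * w)) * s1
          = s1 * w * D.s0 * w * s1 := by simp only [mul_assoc]
        _ = (w * w) * s1 * w * D.s0 * w * s1 * (w * w) := by rw [hww]; simp
        _ = _ := by simp only [mul_assoc]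
    have e5 : r * D.s0 * r = r * μ := by rw [hμd]; simp only [mul_assoc]
    rw [hgx, e4, e5, hyi, hy]
    calc D.wJ * w * (w * (r * μ) * w) * (w * D.wJ)
        = D.wJ * (w * w) * (r * μ) * (w * w) * D.wJ := by simp only [mul_assoc]
      _ = D.wJ * r * μ * D.wJ := by rw [hww]; simp only [mul_one, mul_assoc]
      _ = (D.wJ * r * D.wJ) * (D.wJ⁻¹ * μ * D.wJ) := by group
      _ = r * μ⁻¹ := by
        rw [e2]
        congr 1
        rw [hJi] at e3 ⊢
        exact e3
      _ = (μ * r)⁻¹ := by rw [mul_inv_rev μ r, hri]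
      _ = D.s0 := by rw [← e0, rs0.inv]
  have gk : ∀ k ∈ Set.range cs.simple \ {D.s0, s1}, g k ∈ Set.range cs.simple := by
    intro k hk
    have hkc := Subgroup.subset_closure hk
    have e : g k = D.wJ * (w * k * w⁻¹) * D.wJ := by
      rw [hgx, hh, hpid k (cKJ hkc), hqid k (cKJ1 hkc), hyi, hy, mul_inv_cancel, one_mul, hwi]
      simp only [mul_assoc]
    rw [e]
    have hk' := hwk k hk
    exact hstJ _ ⟨hk'.1, fun h => hk'.2 (Or.inl h)⟩
  have gS : ∀ s ∈ Set.range cs.simple, g s ∈ Set.range cs.simple := by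
    intro s hs
    by_cases h0 : s = D.s0
    · rw [h0, gs0]
      exact hstJ _ ⟨hs1_S, fun e => hne e.symm⟩
    by_cases h1 : s = s1
    · rw [h1, gs1]; exact D.hs0_S
    exact gk s ⟨hs, by simp [h0, h1]⟩
  have gSS : g '' Set.range cs.simple = Set.range cs.simple := by
    have := D.finB
    refine Set.eq_of_subset_of_ncard_le ?_ ?_ (Set.finite_range cs.simple)
    · rintro _ ⟨s, hs, rfl⟩
      exact gS s hs
    · rw [Set.ncard_image_of_injective _ g.injective]
  refine ⟨g⁻¹, ⟨?_, y⁻¹, D.WJ.inv_mem hym, ?_⟩, ?_⟩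
  · show ⇑(g⁻¹ : MulAut W) '' Set.range cs.simple = Set.range cs.simple
    nth_rewrite 1 [← gSS]
    rw [Set.image_image]
    simp
  · intro l hl
    have := gL _ (D.lam_conj' hl y)
    rw [show y * (y⁻¹ * l * y) * y⁻¹ = l by group] at this
    rw [inv_inv]
    nth_rewrite 1 [← this]
    simp
  · rw [← gs1]
    simp

end Final

end AffineData

/-- For every hyperspecial vertex `s₁ ∈ S`, there exists a unique element
`a` of the coset `A_Λ* = {a' ∘ * : a' ∈ A_Λ} ⊆ Aut(W,S)` such that `a(s₀) = s₁`. -/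
theorem exists_unique_dia (cs : CoxeterSystem M W) (D : AffineData cs)
    (s1 : W) (hs1_S : s1 ∈ Set.range cs.simple)
    (hs1_hyper : ∀ w : W, ∃! u : W,
      u ∈ Subgroup.closure (Set.range cs.simple \ {s1}) ∧ w * u⁻¹ ∈ D.Lam) :
    ∃! c : MulAut W, D.InALamStar c ∧ c D.s0 = s1 := by
  obtain ⟨a, ha, ha0⟩ := AffineData.exists_a (D := D) hs1_S hs1_hyper
  refine ⟨a * D.st, ⟨⟨a, ha, rfl⟩, ?_⟩, ?_⟩
  · rw [MulAut.mul_apply, AffineData.st_s0, ha0]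
  · rintro c ⟨⟨a', ha', rfl⟩, hc⟩
    rw [MulAut.mul_apply, AffineData.st_s0] at hc
    obtain ⟨haS, w, hw, hwL⟩ := ha
    obtain ⟨haS', w', hw', hwL'⟩ := ha'
    have hb : a⁻¹ * a' = 1 := by
      refine AffineData.auto_eq_one (D := D) (w := w⁻¹ * w') ?_ ?_
        (D.WJ.mul_mem (D.WJ.inv_mem hw) hw') ?_
      · show ⇑(a⁻¹ * a' : MulAut W) '' Set.range cs.simple = Set.range cs.simple
        have e : ⇑(a⁻¹ * a' : MulAut W) '' Set.range cs.simple = ⇑(a⁻¹ : MulAut W) '' (a' '' Set.range cs.simple) := by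
          rw [Set.image_image]; rfl
        have h1 : a '' Set.range cs.simple = Set.range cs.simple := haS
        have h2 : a' '' Set.range cs.simple = Set.range cs.simple := haS'
        rw [e, h2]
        nth_rewrite 1 [← h1]
        rw [Set.image_image]
        simp
      · rw [MulAut.mul_apply, hc, ← ha0]
        simp
      · intro l hl
        rw [MulAut.mul_apply, hwL' l hl]
        have hl' := D.lam_conj' (D.lam_conj hl w') w
        have := hwL _ hl'
        rw [show w * (w⁻¹ * (w' * l * w'⁻¹) * w) * w⁻¹ = w' * l * w'⁻¹ by group] at this
        rw [← this, MulAut.inv_apply_self]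
        group
    rw [inv_mul_eq_one.1 hb]

end LY
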